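/- arXiv:math/0105074 — 17 statements merged into one kernel-verified Lean document; each statement's English description precedes it below -/
import Mathlib

section
/- Under the scaled ABS recursion, for all indices 1 ≤ j ≤ i ≤ m one has vⱼᵀ(A x_{i+1} − b) = 0. In particular, if v₁,…,v_m are linearly independent in ℝ^m, then A x_{m+1} = b, i.e. the scaled ABS algorithm terminates in at most m steps with a solution of the system. -/
open Matrix

/-- Under the scaled ABS recursion (here `H 0 = H₁`, `x 0 = x₁`, and step `i : Fin m`
produces `x (i+1) = x_{i+2}` in the paper's 1-based numbering), one has
`vⱼᵀ (A x_{i+1} − b) = 0` for all `j ≤ i`; in particular, if the scaling vectors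
`v₁,…,v_m` are linearly independent, then `A x_{m+1} = b`, i.e. the scaled ABS
algorithm terminates in at most `m` steps with a solution of the system. -/
theorem scaledABS_residual_orthogonality_and_termination
    (m n : ℕ) (hmn : m ≤ n)
    (A : Matrix (Fin m) (Fin n) ℝ) (b : Fin m → ℝ)
    (H : ℕ → Matrix (Fin n) (Fin n) ℝ) (x : ℕ → Fin n → ℝ)
    (v : Fin m → Fin m → ℝ) (z w : Fin m → Fin n → ℝ)
    (p : Fin m → Fin n → ℝ)
    (hH0 : IsUnit (H 0).det)
    (hp : ∀ i : Fin m, p i = (H ↑i)ᵀ *ᵥ z i)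
    (hpden : ∀ i : Fin m, v i ⬝ᵥ (A *ᵥ p i) ≠ 0)
    (hx : ∀ i : Fin m,
      x (↑i + 1) = x ↑i - ((v i ⬝ᵥ (A *ᵥ x ↑i - b)) / (v i ⬝ᵥ (A *ᵥ p i))) • p i)
    (hHden : ∀ i : Fin m, w i ⬝ᵥ (H ↑i *ᵥ (Aᵀ *ᵥ v i)) ≠ 0)
    (hH : ∀ i : Fin m,
      H (↑i + 1) = H ↑i -
        (w i ⬝ᵥ (H ↑i *ᵥ (Aᵀ *ᵥ v i)))⁻¹ •
          vecMulVec (H ↑i *ᵥ (Aᵀ *ᵥ v i)) (w i ᵥ* H ↑i)) :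
    (∀ j i : Fin m, j ≤ i → v j ⬝ᵥ (A *ᵥ x (↑i + 1) - b) = 0) ∧
    (LinearIndependent ℝ v → A *ᵥ x m = b) := by
  have hA : ∀ k : ℕ, k ≤ m → ∀ j : Fin m, (j : ℕ) < k → H k *ᵥ (Aᵀ *ᵥ v j) = 0 := by
    intro k
    induction k with
    | zero => intro _ j hj; omega
    | succ k ih =>
      intro hk j hj
      have h1 := hH ⟨k, hk⟩
      have h2 := hHden ⟨k, hk⟩
      simp only at h1 h2
      rw [h1, sub_mulVec, smul_mulVec, vecMulVec_mulVec, ← dotProduct_mulVec]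
      rcases Nat.lt_succ_iff_lt_or_eq.mp hj with h | h
      · rw [ih (by omega) j h]
        simp
      · have hjk : j = ⟨k, hk⟩ := Fin.ext h
        subst hjk
        ext t
        simp only [Pi.sub_apply, Pi.smul_apply, smul_eq_mul, MulOpposite.smul_eq_mul_unop,
          MulOpposite.unop_op, Pi.zero_apply]
        field_simp
        ring
  have hP : ∀ i j : Fin m, j < i → v j ⬝ᵥ (A *ᵥ p i) = 0 := by
    intro i j hji
    have h := hA i i.isLt.le j hji
    rw [hp i, dotProduct_mulVec, ← mulVec_transpose, dotProduct_mulVec, vecMul_transpose, h,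
      zero_dotProduct]
  have hR : ∀ k : ℕ, k ≤ m → ∀ j : Fin m, (j : ℕ) < k → v j ⬝ᵥ (A *ᵥ x k - b) = 0 := by
    intro k
    induction k with
    | zero => intro _ j hj; omega
    | succ k ih =>
      intro hk j hj
      have h1 := hx ⟨k, hk⟩
      have h2 := hpden ⟨k, hk⟩
      simp only at h1
      rw [h1, mulVec_sub, mulVec_smul, sub_right_comm, dotProduct_sub, dotProduct_smul]
      rcases Nat.lt_succ_iff_lt_or_eq.mp hj with h | h
      · rw [ih (by omega) j h, hP ⟨k, hk⟩ j h]
        simp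
      · have hjk : j = ⟨k, hk⟩ := Fin.ext h
        subst hjk
        rw [smul_eq_mul, div_mul_cancel₀ _ h2, sub_self]
  refine ⟨fun j i hji => hR (i + 1) i.isLt j (Nat.lt_succ_of_le hji), fun hv => ?_⟩
  have hu : IsUnit (Matrix.of v) := Matrix.linearIndependent_rows_iff_isUnit.mp hv
  have h0 : Matrix.of v *ᵥ (A *ᵥ x m - b) = Matrix.of v *ᵥ 0 := by
    rw [mulVec_zero]
    ext j
    exact hR m le_rfl j j.isLt
  exact sub_eq_zero.mp (Matrix.mulVec_injective_of_isUnit hu h0)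
end

section
/- Under the Abaffian recursion, for all indices 1 ≤ j ≤ i ≤ m one has H_{i+1} Aᵀ vⱼ = 0; that is, the vectors Aᵀv₁,…,Aᵀv_i lie in the null space of the (i+1)-st Abaffian. -/
open Matrix

/-- Under the Abaffian recursion (with `H 0 = H₁`), for all `j ≤ i` one has
`H_{i+1} Aᵀ vⱼ = 0`: the vectors `Aᵀv₁,…,Aᵀv_i` lie in the null space of the
`(i+1)`-st Abaffian. -/
theorem abaffian_annihilates_scaled_rows
    (m n : ℕ) (hmn : m ≤ n)
    (A : Matrix (Fin m) (Fin n) ℝ)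
    (H : ℕ → Matrix (Fin n) (Fin n) ℝ)
    (v : Fin m → Fin m → ℝ) (w : Fin m → Fin n → ℝ)
    (hH0 : IsUnit (H 0).det)
    (hHden : ∀ i : Fin m, w i ⬝ᵥ (H ↑i *ᵥ (Aᵀ *ᵥ v i)) ≠ 0)
    (hH : ∀ i : Fin m,
      H (↑i + 1) = H ↑i -
        (w i ⬝ᵥ (H ↑i *ᵥ (Aᵀ *ᵥ v i)))⁻¹ •
          vecMulVec (H ↑i *ᵥ (Aᵀ *ᵥ v i)) (w i ᵥ* H ↑i)) :
    ∀ j i : Fin m, j ≤ i → H (↑i + 1) *ᵥ (Aᵀ *ᵥ v j) = 0 := by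
  have step : ∀ (i : Fin m) (x : Fin n → ℝ), H (↑i + 1) *ᵥ x = H ↑i *ᵥ x -
      ((w i ⬝ᵥ (H ↑i *ᵥ (Aᵀ *ᵥ v i)))⁻¹ * (w i ⬝ᵥ (H ↑i *ᵥ x))) •
        (H ↑i *ᵥ (Aᵀ *ᵥ v i)) := by
    intro i x
    rw [hH i, Matrix.sub_mulVec, Matrix.smul_mulVec, Matrix.vecMulVec_mulVec,
      ← Matrix.dotProduct_mulVec, op_smul_eq_smul, smul_smul]
  have key : ∀ (j : Fin m) (k : ℕ), (j : ℕ) ≤ k → k < m →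
      H (k + 1) *ᵥ (Aᵀ *ᵥ v j) = 0 := by
    intro j k hjk
    induction k, hjk using Nat.le_induction with
    | base =>
      intro _
      rw [step j, inv_mul_cancel₀ (hHden j), one_smul, sub_self]
    | succ k hk ih =>
      intro hkm
      have h0 := ih (by omega)
      have h1 := step ⟨k + 1, hkm⟩ (Aᵀ *ᵥ v j)
      simp only [h0] at h1
      simpa using h1
  intro j i hji
  exact key j i hji i.isLt
end

section
/- Under the Abaffian recursion, for all indices 1 ≤ j ≤ i ≤ m one has H_{i+1}ᵀ wⱼ = 0; that is, the vectors w₁,…,w_i lie in the null space of the transpose of the (i+1)-st Abaffian. -/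
open Matrix

/-- Under the Abaffian recursion (with `H 0 = H₁`), for all `j ≤ i` one has
`H_{i+1}ᵀ wⱼ = 0`: the vectors `w₁,…,w_i` lie in the null space of the transpose
of the `(i+1)`-st Abaffian. -/
theorem abaffian_transpose_annihilates_w
    (m n : ℕ) (hmn : m ≤ n)
    (A : Matrix (Fin m) (Fin n) ℝ)
    (H : ℕ → Matrix (Fin n) (Fin n) ℝ)
    (v : Fin m → Fin m → ℝ) (w : Fin m → Fin n → ℝ)
    (hH0 : IsUnit (H 0).det)
    (hHden : ∀ i : Fin m, w i ⬝ᵥ (H ↑i *ᵥ (Aᵀ *ᵥ v i)) ≠ 0)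
    (hH : ∀ i : Fin m,
      H (↑i + 1) = H ↑i -
        (w i ⬝ᵥ (H ↑i *ᵥ (Aᵀ *ᵥ v i)))⁻¹ •
          vecMulVec (H ↑i *ᵥ (Aᵀ *ᵥ v i)) (w i ᵥ* H ↑i)) :
    ∀ j i : Fin m, j ≤ i → (H (↑i + 1))ᵀ *ᵥ w j = 0 := by
  intro j i hji
  have step : ∀ i : Fin m, w j ᵥ* H (↑i + 1) = w j ᵥ* H ↑i -
      ((w i ⬝ᵥ (H ↑i *ᵥ (Aᵀ *ᵥ v i)))⁻¹ * (w j ⬝ᵥ (H ↑i *ᵥ (Aᵀ *ᵥ v i)))) •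
        (w i ᵥ* H ↑i) := by
    intro i
    rw [hH i, Matrix.vecMul_sub, Matrix.vecMul_smul, Matrix.vecMul_vecMulVec, smul_smul]
  have key : ∀ k : ℕ, (j : ℕ) ≤ k → k < m → w j ᵥ* H (k + 1) = 0 := by
    intro k hk
    induction k, hk using Nat.le_induction with
    | base =>
      intro _
      rw [step j, inv_mul_cancel₀ (hHden j), one_smul, sub_self]
    | succ k hk ih =>
      intro hkm
      have h0 := ih (by omega)
      have h1 := step ⟨k + 1, hkm⟩
      simp only [Matrix.dotProduct_mulVec (w j), h0, zero_dotProduct, mul_zero, zero_smul,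
        sub_zero] at h1
      exact h1
  rw [Matrix.mulVec_transpose]
  exact key i hji i.isLt
end

section
/- Under the Abaffian recursion carried out through step i−1 (so that wⱼᵀ Hⱼ Aᵀ vⱼ ≠ 0 for j = 1,…,i−1), the vector H_i Aᵀ v_i is zero if and only if Aᵀ v_i belongs to the linear span of Aᵀ v₁, …, Aᵀ v_{i−1}. In particular, in the basic ABS class where vⱼ = eⱼ is the j-th unit vector of ℝ^m, H_i a_i = 0 if and only if the i-th row a_i of A is a linear combination of the rows a₁,…,a_{i−1}. -/
open Matrix

/-- Under the Abaffian recursion carried out through step `i−1` (here 0-indexed: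
`H 0 = H₁` and the recursion hypotheses hold for all steps `j < i`), the vector
`H_i Aᵀ v_i` is zero iff `Aᵀ v_i` lies in the span of `Aᵀ v₁, …, Aᵀ v_{i−1}`.
In particular, in the basic ABS class where `vⱼ = eⱼ`, `H_i a_i = 0` iff the
`i`-th row `a_i` of `A` is a linear combination of the rows `a₁,…,a_{i−1}`. -/
theorem abaffian_kernel_characterization
    (m n : ℕ) (hmn : m ≤ n)
    (A : Matrix (Fin m) (Fin n) ℝ)
    (H : ℕ → Matrix (Fin n) (Fin n) ℝ)
    (v : Fin m → Fin m → ℝ) (w : Fin m → Fin n → ℝ)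
    (i : Fin m)
    (hH0 : IsUnit (H 0).det)
    (hHden : ∀ j : Fin m, j < i → w j ⬝ᵥ (H ↑j *ᵥ (Aᵀ *ᵥ v j)) ≠ 0)
    (hH : ∀ j : Fin m, j < i →
      H (↑j + 1) = H ↑j -
        (w j ⬝ᵥ (H ↑j *ᵥ (Aᵀ *ᵥ v j)))⁻¹ •
          vecMulVec (H ↑j *ᵥ (Aᵀ *ᵥ v j)) (w j ᵥ* H ↑j)) :
    (H ↑i *ᵥ (Aᵀ *ᵥ v i) = 0 ↔
      Aᵀ *ᵥ v i ∈ Submodule.span ℝ {u : Fin n → ℝ | ∃ j : Fin m, j < i ∧ u = Aᵀ *ᵥ v j}) ∧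
    ((∀ j : Fin m, v j = Pi.single j 1) →
      (H ↑i *ᵥ A i = 0 ↔
        A i ∈ Submodule.span ℝ {u : Fin n → ℝ | ∃ j : Fin m, j < i ∧ u = A j})) := by
  have step : ∀ j : Fin m, j < i → ∀ x : Fin n → ℝ, H (↑j + 1) *ᵥ x = H ↑j *ᵥ x -
      ((w j ⬝ᵥ (H ↑j *ᵥ (Aᵀ *ᵥ v j)))⁻¹ * (w j ⬝ᵥ (H ↑j *ᵥ x))) •
        (H ↑j *ᵥ (Aᵀ *ᵥ v j)) := by
    intro j hj x
    rw [hH j hj, Matrix.sub_mulVec, Matrix.smul_mulVec, Matrix.vecMulVec_mulVec,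
      ← Matrix.dotProduct_mulVec, op_smul_eq_smul, smul_smul]
  have key : ∀ k : ℕ, k ≤ (i : ℕ) → ∀ x : Fin n → ℝ, H k *ᵥ x = 0 ↔
      x ∈ Submodule.span ℝ {u : Fin n → ℝ | ∃ j : Fin m, (j : ℕ) < k ∧ u = Aᵀ *ᵥ v j} := by
    intro k
    induction k with
    | zero =>
      intro _ x
      have hinj := Matrix.mulVec_injective_of_isUnit ((Matrix.isUnit_iff_isUnit_det _).2 hH0)
      simp only [Nat.not_lt_zero, false_and, exists_false, Set.setOf_false,
        Submodule.span_empty, Submodule.mem_bot]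
      constructor
      · intro h
        exact hinj (by simpa using h)
      · rintro rfl
        simp
    | succ k ih =>
      intro hk x
      have ih' := ih (by omega)
      obtain ⟨j, rfl⟩ : ∃ j : Fin m, (j : ℕ) = k := ⟨⟨k, by omega⟩, rfl⟩
      have hj : j < i := by
        rw [Fin.lt_def]
        omega
      constructor
      · intro h
        rw [step j hj, ← Matrix.mulVec_smul, ← Matrix.mulVec_sub, ih'] at h
        have h1 := Submodule.span_mono (R := ℝ)
          (t := {u : Fin n → ℝ | ∃ l : Fin m, (l : ℕ) < (j : ℕ) + 1 ∧ u = Aᵀ *ᵥ v l})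
          (by
            rintro u ⟨l, hl, rfl⟩
            exact ⟨l, by omega, rfl⟩) h
        have h2 : Aᵀ *ᵥ v j ∈ Submodule.span ℝ
            {u : Fin n → ℝ | ∃ l : Fin m, (l : ℕ) < (j : ℕ) + 1 ∧ u = Aᵀ *ᵥ v l} :=
          Submodule.subset_span ⟨j, by omega, rfl⟩
        have h3 := Submodule.add_mem _ h1 (Submodule.smul_mem _
          ((w j ⬝ᵥ (H ↑j *ᵥ (Aᵀ *ᵥ v j)))⁻¹ * (w j ⬝ᵥ (H ↑j *ᵥ x))) h2)
        simpa using h3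
      · intro h
        induction h using Submodule.span_induction with
        | mem u hu =>
          obtain ⟨l, hl, rfl⟩ := hu
          rw [step j hj]
          rcases Nat.lt_succ_iff_lt_or_eq.1 hl with h | h
          · have := (ih' _).2 (Submodule.subset_span ⟨l, h, rfl⟩)
            rw [this]
            simp
          · obtain rfl : l = j := Fin.ext h
            rw [inv_mul_cancel₀ (hHden l hj)]
            simp
        | zero => simp
        | add a b _ _ ha hb => rw [Matrix.mulVec_add, ha, hb, add_zero]
        | smul c a _ ha => rw [Matrix.mulVec_smul, ha, smul_zero]
  have main := key i le_rfl
  refine ⟨main _, ?_⟩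
  intro hv
  have hA : ∀ j, Aᵀ *ᵥ v j = A j := by
    intro j
    rw [hv j, Matrix.mulVec_single_one]
    rfl
  have := main (A i)
  simp only [hA] at this
  exact this
end

section
/- Under the scaled ABS recursion, the m×m matrix L with entries L_{jk} = vⱼᵀ A p_k is lower triangular with nonzero diagonal entries; that is, vⱼᵀ A p_k = 0 whenever j < k and v_kᵀ A p_k ≠ 0 for every k. In particular L is nonsingular. -/
open Matrix

/-- Under the scaled ABS recursion, the `m×m` matrix `L` with entries
`L_{jk} = vⱼᵀ A p_k` is lower triangular with nonzero diagonal entries: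
`vⱼᵀ A p_k = 0` for `j < k` and `v_kᵀ A p_k ≠ 0` for every `k`.
In particular `L` is nonsingular. -/
theorem scaledABS_implicit_factorization_lower_triangular
    (m n : ℕ) (hmn : m ≤ n)
    (A : Matrix (Fin m) (Fin n) ℝ) (b : Fin m → ℝ)
    (H : ℕ → Matrix (Fin n) (Fin n) ℝ) (x : ℕ → Fin n → ℝ)
    (v : Fin m → Fin m → ℝ) (z w : Fin m → Fin n → ℝ)
    (p : Fin m → Fin n → ℝ)
    (hH0 : IsUnit (H 0).det)
    (hp : ∀ i : Fin m, p i = (H ↑i)ᵀ *ᵥ z i)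
    (hpden : ∀ i : Fin m, v i ⬝ᵥ (A *ᵥ p i) ≠ 0)
    (hx : ∀ i : Fin m,
      x (↑i + 1) = x ↑i - ((v i ⬝ᵥ (A *ᵥ x ↑i - b)) / (v i ⬝ᵥ (A *ᵥ p i))) • p i)
    (hHden : ∀ i : Fin m, w i ⬝ᵥ (H ↑i *ᵥ (Aᵀ *ᵥ v i)) ≠ 0)
    (hH : ∀ i : Fin m,
      H (↑i + 1) = H ↑i -
        (w i ⬝ᵥ (H ↑i *ᵥ (Aᵀ *ᵥ v i)))⁻¹ •
          vecMulVec (H ↑i *ᵥ (Aᵀ *ᵥ v i)) (w i ᵥ* H ↑i)) :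
    (∀ j k : Fin m, j < k → v j ⬝ᵥ (A *ᵥ p k) = 0) ∧
    (∀ k : Fin m, v k ⬝ᵥ (A *ᵥ p k) ≠ 0) ∧
    IsUnit (Matrix.of fun j k : Fin m => v j ⬝ᵥ (A *ᵥ p k)).det := by
  have step : ∀ (i : Fin m) (u : Fin n → ℝ), H (↑i + 1) *ᵥ u = H ↑i *ᵥ u -
      ((w i ⬝ᵥ (H ↑i *ᵥ (Aᵀ *ᵥ v i)))⁻¹ * (w i ⬝ᵥ (H ↑i *ᵥ u))) •
        (H ↑i *ᵥ (Aᵀ *ᵥ v i)) := by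
    intro i u
    rw [hH i, Matrix.sub_mulVec, Matrix.smul_mulVec, Matrix.vecMulVec_mulVec,
      ← Matrix.dotProduct_mulVec]
    ext t
    simp
    ring
  have key : ∀ (k : ℕ), k ≤ m → ∀ j : Fin m, (j : ℕ) < k → H k *ᵥ (Aᵀ *ᵥ v j) = 0 := by
    intro k
    induction k with
    | zero => intro _ j hj; omega
    | succ k ih =>
      intro hk j hj
      have h := step ⟨k, hk⟩ (Aᵀ *ᵥ v j)
      simp only at h
      rw [h]
      rcases Nat.lt_succ_iff_lt_or_eq.mp hj with hlt | heq
      · rw [ih (by omega) j hlt]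
        simp
      · have hjk : (⟨k, hk⟩ : Fin m) = j := Fin.ext heq.symm
        have hd := hHden j
        rw [hjk]
        subst heq
        rw [inv_mul_cancel₀ hd, one_smul, sub_self]
  have tri : ∀ j k : Fin m, j < k → v j ⬝ᵥ (A *ᵥ p k) = 0 := by
    intro j k hjk
    have h := key k k.2.le j hjk
    rw [hp k, Matrix.dotProduct_mulVec, ← Matrix.mulVec_transpose, Matrix.dotProduct_mulVec,
      Matrix.vecMul_transpose, h, zero_dotProduct]
  refine ⟨tri, hpden, ?_⟩
  rw [Matrix.det_of_isLowerTriangular (Matrix.of fun j k : Fin m => v j ⬝ᵥ (A *ᵥ p k))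
    (fun j k hjk => tri j k hjk), isUnit_iff_ne_zero]
  exact Finset.prod_ne_zero_iff.mpr fun k _ => hpden k
end

section
/- Under the scaled ABS recursion with m = n, suppose A is nonsingular and V = (v₁,…,vₙ) is nonsingular. Then the matrix P = (p₁,…,pₙ) whose columns are the search vectors is nonsingular, the matrix L = Vᵀ A P is nonsingular, and A⁻¹ = P L⁻¹ Vᵀ. -/
open Matrix

/-- Under the scaled ABS recursion with `m = n`, if `A` is nonsingular and the
matrix `V = (v₁,…,vₙ)` of scaling vectors is nonsingular, then the matrix
`P = (p₁,…,pₙ)` of search vectors is nonsingular, `L = Vᵀ A P` is nonsingular,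
and `A⁻¹ = P L⁻¹ Vᵀ` (the semiexplicit factorization of the inverse). -/
theorem scaledABS_inverse_factorization
    (n : ℕ)
    (A : Matrix (Fin n) (Fin n) ℝ) (hA : IsUnit A.det) (b : Fin n → ℝ)
    (H : ℕ → Matrix (Fin n) (Fin n) ℝ) (x : ℕ → Fin n → ℝ)
    (v : Fin n → Fin n → ℝ) (z w : Fin n → Fin n → ℝ)
    (p : Fin n → Fin n → ℝ)
    (hH0 : IsUnit (H 0).det)
    (hV : IsUnit (Matrix.of fun a i : Fin n => v i a).det)
    (hp : ∀ i : Fin n, p i = (H ↑i)ᵀ *ᵥ z i)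
    (hpden : ∀ i : Fin n, v i ⬝ᵥ (A *ᵥ p i) ≠ 0)
    (hx : ∀ i : Fin n,
      x (↑i + 1) = x ↑i - ((v i ⬝ᵥ (A *ᵥ x ↑i - b)) / (v i ⬝ᵥ (A *ᵥ p i))) • p i)
    (hHden : ∀ i : Fin n, w i ⬝ᵥ (H ↑i *ᵥ (Aᵀ *ᵥ v i)) ≠ 0)
    (hH : ∀ i : Fin n,
      H (↑i + 1) = H ↑i -
        (w i ⬝ᵥ (H ↑i *ᵥ (Aᵀ *ᵥ v i)))⁻¹ •
          vecMulVec (H ↑i *ᵥ (Aᵀ *ᵥ v i)) (w i ᵥ* H ↑i)) :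
    IsUnit (Matrix.of fun a i : Fin n => p i a).det ∧
    IsUnit ((Matrix.of fun a i : Fin n => v i a)ᵀ * A *
      (Matrix.of fun a i : Fin n => p i a)).det ∧
    A⁻¹ = (Matrix.of fun a i : Fin n => p i a) *
      ((Matrix.of fun a i : Fin n => v i a)ᵀ * A *
        (Matrix.of fun a i : Fin n => p i a))⁻¹ *
      (Matrix.of fun a i : Fin n => v i a)ᵀ := by
  have key : ∀ k : ℕ, k ≤ n → ∀ j : Fin n, (j : ℕ) < k → H k *ᵥ (Aᵀ *ᵥ v j) = 0 := by
    intro k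
    induction k with
    | zero => intro _ j hj; omega
    | succ k ih =>
      intro hk j hj
      have e := hH ⟨k, hk⟩
      have hd := hHden ⟨k, hk⟩
      simp only at e hd
      have mv : ∀ a c d : Fin n → ℝ, vecMulVec a c *ᵥ d = (c ⬝ᵥ d) • a := by
        intro a c d
        ext t
        simp only [mulVec, vecMulVec_apply, dotProduct, Pi.smul_apply, smul_eq_mul,
          Finset.sum_mul]
        exact Finset.sum_congr rfl fun _ _ => by ring
      rw [e, sub_mulVec, smul_mulVec, mv, ← dotProduct_mulVec]
      rcases Nat.lt_succ_iff_lt_or_eq.mp hj with h | h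
      · rw [ih (by omega) j h]
        simp
      · have hj' : j = ⟨k, hk⟩ := Fin.ext h
        subst hj'
        rw [smul_smul, inv_mul_cancel₀ hd, one_smul, sub_self]
  set V := Matrix.of fun a i : Fin n => v i a with hVd
  set P := Matrix.of fun a i : Fin n => p i a with hPd
  have ent : ∀ i j, (Vᵀ * A * P) i j = v i ⬝ᵥ (A *ᵥ p j) := by
    intro i j
    rw [Matrix.mul_assoc]
    rfl
  have tri : (Vᵀ * A * P).BlockTriangular OrderDual.toDual := by
    intro i j hij
    have hij' : i < j := hij
    rw [ent, hp j, dotProduct_mulVec, dotProduct_mulVec, ← mulVec_transpose, ← mulVec_transpose,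
      transpose_transpose, key j j.2.le i hij', zero_dotProduct]
  have hL : IsUnit (Vᵀ * A * P).det := by
    rw [det_of_lowerTriangular _ tri, isUnit_iff_ne_zero]
    exact Finset.prod_ne_zero_iff.mpr fun i _ => by rw [ent]; exact hpden i
  have hP : IsUnit P.det := by
    rw [det_mul] at hL
    exact isUnit_of_mul_isUnit_right hL
  refine ⟨hP, hL, ?_⟩
  have hVt : IsUnit Vᵀ.det := by rwa [det_transpose]
  rw [Matrix.mul_inv_rev, Matrix.mul_inv_rev, ← Matrix.mul_assoc, Matrix.mul_nonsing_inv _ hP,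
    Matrix.one_mul, Matrix.mul_assoc, Matrix.nonsing_inv_mul _ hVt, Matrix.mul_one]
end

section
/- Under the scaled ABS recursion, suppose A has full row rank m and V = (v₁,…,v_m) ∈ ℝ^{m×m} is nonsingular. Then the solution set of A x = b is exactly { x_{m+1} + H_{m+1}ᵀ q : q ∈ ℝⁿ }; that is, every vector of this form solves A x = b, and every solution x of A x = b can be written as x = x_{m+1} + H_{m+1}ᵀ q for some q ∈ ℝⁿ. -/
open Matrix

/-- Under the scaled ABS recursion (with `H 0 = H₁`, `x 0 = x₁`, so `x m = x_{m+1}`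
and `H m = H_{m+1}`), if `A` has full row rank and `V = (v₁,…,v_m)` is nonsingular,
then the solution set of `A x = b` is exactly `{ x_{m+1} + H_{m+1}ᵀ q : q ∈ ℝⁿ }`. -/
theorem scaledABS_general_solution
    (m n : ℕ) (hmn : m ≤ n)
    (A : Matrix (Fin m) (Fin n) ℝ) (b : Fin m → ℝ)
    (hA : LinearIndependent ℝ (fun i : Fin m => A i))
    (H : ℕ → Matrix (Fin n) (Fin n) ℝ) (x : ℕ → Fin n → ℝ)
    (v : Fin m → Fin m → ℝ) (z w : Fin m → Fin n → ℝ)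
    (p : Fin m → Fin n → ℝ)
    (hH0 : IsUnit (H 0).det)
    (hV : IsUnit (Matrix.of fun a i : Fin m => v i a).det)
    (hp : ∀ i : Fin m, p i = (H ↑i)ᵀ *ᵥ z i)
    (hpden : ∀ i : Fin m, v i ⬝ᵥ (A *ᵥ p i) ≠ 0)
    (hx : ∀ i : Fin m,
      x (↑i + 1) = x ↑i - ((v i ⬝ᵥ (A *ᵥ x ↑i - b)) / (v i ⬝ᵥ (A *ᵥ p i))) • p i)
    (hHden : ∀ i : Fin m, w i ⬝ᵥ (H ↑i *ᵥ (Aᵀ *ᵥ v i)) ≠ 0)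
    (hH : ∀ i : Fin m,
      H (↑i + 1) = H ↑i -
        (w i ⬝ᵥ (H ↑i *ᵥ (Aᵀ *ᵥ v i)))⁻¹ •
          vecMulVec (H ↑i *ᵥ (Aᵀ *ᵥ v i)) (w i ᵥ* H ↑i)) :
    ∀ y : Fin n → ℝ, A *ᵥ y = b ↔ ∃ q : Fin n → ℝ, y = x m + (H m)ᵀ *ᵥ q := by
  have key : ∀ k : ℕ, k ≤ m →
      (∀ j : Fin m, (j : ℕ) < k → H k *ᵥ (Aᵀ *ᵥ v j) = 0) ∧
      (∀ j : Fin m, (j : ℕ) < k → v j ⬝ᵥ (A *ᵥ x k - b) = 0) ∧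
      (∀ u : Fin n → ℝ, (∀ j : Fin m, (j : ℕ) < k → v j ⬝ᵥ (A *ᵥ u) = 0) →
        ∃ q : Fin n → ℝ, u = (H k)ᵀ *ᵥ q) := by
    -- moving `A` and `H` across the dot product
    have adj : ∀ (k : ℕ) (j : Fin m) (q : Fin n → ℝ),
        v j ⬝ᵥ (A *ᵥ ((H k)ᵀ *ᵥ q)) = (H k *ᵥ (Aᵀ *ᵥ v j)) ⬝ᵥ q := by
      intro k j q
      rw [dotProduct_mulVec, dotProduct_mulVec, vecMul_transpose, mulVec_transpose]
    intro k
    induction k with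
    | zero =>
      intro _
      refine ⟨fun j hj => absurd hj (Nat.not_lt_zero _),
        fun j hj => absurd hj (Nat.not_lt_zero _), fun u _ => ⟨((H 0)ᵀ)⁻¹ *ᵥ u, ?_⟩⟩
      have h0 : IsUnit ((H 0)ᵀ).det := by rwa [det_transpose]
      rw [mulVec_mulVec, mul_nonsing_inv _ h0, one_mulVec]
    | succ k ih =>
      intro hk
      obtain ⟨h1, h2, h3⟩ := ih (by omega)
      have hHk := hH ⟨k, hk⟩
      have hxk := hx ⟨k, hk⟩
      have hpk := hp ⟨k, hk⟩
      have hd := hpden ⟨k, hk⟩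
      have hc := hHden ⟨k, hk⟩
      simp only at hHk hxk hpk hd hc
      have split : ∀ j : Fin m, (j : ℕ) < k + 1 → (j : ℕ) < k ∨ j = ⟨k, hk⟩ := by
        intro j hj
        rcases Nat.lt_succ_iff_lt_or_eq.mp hj with h | h
        · exact Or.inl h
        · exact Or.inr (Fin.ext h)
      refine ⟨fun j hj => ?_, fun j hj => ?_, fun u hu => ?_⟩
      · rw [hHk, sub_mulVec, smul_mulVec, vecMulVec_mulVec, ← dotProduct_mulVec]
        rcases split j hj with h | rfl
        · rw [h1 j h]; simp
        · ext a
          simp only [Pi.sub_apply, Pi.smul_apply, smul_eq_mul, MulOpposite.smul_eq_mul_unop,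
            MulOpposite.unop_op, Pi.zero_apply]
          field_simp
          ring
      · have e : v j ⬝ᵥ (A *ᵥ x (k + 1) - b) = v j ⬝ᵥ (A *ᵥ x k - b) -
            ((v ⟨k, hk⟩ ⬝ᵥ (A *ᵥ x k - b)) / (v ⟨k, hk⟩ ⬝ᵥ (A *ᵥ p ⟨k, hk⟩))) *
              (v j ⬝ᵥ (A *ᵥ p ⟨k, hk⟩)) := by
          rw [hxk, mulVec_sub, mulVec_smul]
          simp only [dotProduct_sub, dotProduct_smul, smul_eq_mul]
          ring
        rw [e]
        rcases split j hj with h | rfl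
        · rw [h2 j h, hpk, adj, adj, h1 j h]; simp
        · rw [div_mul_cancel₀ _ hd, sub_self]
      · obtain ⟨q, hq⟩ := h3 u (fun j hj => hu j (by omega))
        refine ⟨q, ?_⟩
        have h0 : (H k *ᵥ (Aᵀ *ᵥ v ⟨k, hk⟩)) ⬝ᵥ q = 0 := by
          rw [← adj, ← hq]
          exact hu _ (Nat.lt_succ_self k)
        rw [hHk, transpose_sub, transpose_smul, transpose_vecMulVec, sub_mulVec, smul_mulVec,
          vecMulVec_mulVec, h0, ← hq]
        simp
  obtain ⟨h1, h2, h3⟩ := key m le_rfl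
  -- nonsingularity of `V`
  have vz : ∀ c : Fin m → ℝ, (∀ j, v j ⬝ᵥ c = 0) → c = 0 := by
    intro c hc
    have hV2 : IsUnit ((Matrix.of fun a i : Fin m => v i a)ᵀ) := by
      rw [isUnit_iff_isUnit_det, det_transpose]; exact hV
    apply mulVec_injective_of_isUnit hV2
    rw [mulVec_zero]
    ext j
    exact hc j
  have hxm : A *ᵥ x m = b := sub_eq_zero.mp (vz _ fun j => h2 j j.2)
  intro y
  constructor
  · intro hy
    obtain ⟨q, hq⟩ := h3 (y - x m) (fun j _ => by rw [mulVec_sub, hy, hxm]; simp)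
    exact ⟨q, by rw [← hq]; simp⟩
  · rintro ⟨q, rfl⟩
    rw [mulVec_add, hxm, add_eq_left]
    apply vz
    intro j
    rw [dotProduct_mulVec, dotProduct_mulVec, vecMul_transpose, ← mulVec_transpose,
      h1 j j.2, zero_dotProduct]
end

section
/- Under the Abaffian recursion carried out through step i, let V_i = (v₁,…,v_i) ∈ ℝ^{m×i} and W_i = (w₁,…,w_i) ∈ ℝ^{n×i}. Then the i×i matrix W_iᵀ H₁ Aᵀ V_i is invertible and the Abaffian satisfies the explicit representation H_{i+1} = H₁ − H₁ Aᵀ V_i (W_iᵀ H₁ Aᵀ V_i)⁻¹ W_iᵀ H₁. -/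
open Matrix

lemma abaffian_block_step {n k : ℕ}
    (K : Matrix (Fin n) (Fin n) ℝ) (Y : Matrix (Fin n) (Fin k) ℝ) (R : Matrix (Fin k) (Fin n) ℝ)
    (X : Matrix (Fin k) (Fin k) ℝ) (y : Matrix (Fin n) (Fin 1) ℝ) (r : Matrix (Fin 1) (Fin n) ℝ)
    (d : ℝ) (hd : d ≠ 0) (hX : X * (R * K * Y) = 1)
    (H : Matrix (Fin n) (Fin n) ℝ) (hH : H = K - K * Y * X * R * K)
    (hdd : r * H * y = d • (1 : Matrix (Fin 1) (Fin 1) ℝ)) :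
    ∃ X' : Matrix (Fin k ⊕ Fin 1) (Fin k ⊕ Fin 1) ℝ,
      X' * (fromRows R r * K * fromCols Y y) = 1 ∧
      H - d⁻¹ • ((H * y) * (r * H)) = K - K * fromCols Y y * X' * fromRows R r * K := by
  obtain ⟨a, ha⟩ : ∃ a, a = X * (R * K * y) := ⟨_, rfl⟩
  obtain ⟨b, hb⟩ : ∃ b, b = (r * K * Y) * X := ⟨_, rfl⟩
  have hbM : b * (R * K * Y) = r * K * Y := by
    rw [hb, Matrix.mul_assoc, hX, Matrix.mul_one]
  have hs : r * K * y = d • (1 : Matrix (Fin 1) (Fin 1) ℝ) + b * (R * K * y) := by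
    rw [← hdd, hH, hb]
    simp only [Matrix.mul_sub, Matrix.sub_mul, Matrix.mul_assoc]
    abel
  have hp : H * y = K * y - K * Y * a := by
    rw [hH, ha]
    simp only [Matrix.sub_mul, Matrix.mul_assoc]
  have hq : r * H = r * K - b * R * K := by
    rw [hH, hb]
    simp only [Matrix.mul_sub, Matrix.mul_assoc]
  refine ⟨fromBlocks (X + d⁻¹ • (a * b)) (-(d⁻¹ • a)) (-(d⁻¹ • b)) (d⁻¹ • 1), ?_, ?_⟩
  · rw [fromRows_mul, fromRows_mul_fromCols, fromBlocks_multiply, ← fromBlocks_one, hs]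
    congr 1
    · rw [Matrix.add_mul, hX, Matrix.smul_mul, Matrix.mul_assoc a, hbM]
      simp
    · rw [Matrix.add_mul, ← ha]
      simp [Matrix.mul_add, Matrix.mul_assoc, smul_smul, hd]
      abel
    · rw [← hbM]
      simp [Matrix.mul_assoc]
    · simp [smul_smul, hd]
  · rw [hp, hq, hH, mul_fromCols, fromCols_mul_fromBlocks, fromCols_mul_fromRows]
    simp only [Matrix.mul_sub, Matrix.sub_mul, Matrix.mul_add, Matrix.add_mul, Matrix.mul_smul,
      Matrix.smul_mul, Matrix.mul_neg, Matrix.neg_mul, Matrix.mul_assoc, smul_sub,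
      Matrix.mul_one]
    abel

lemma abaffian_seq {n : ℕ} (H : ℕ → Matrix (Fin n) (Fin n) ℝ) (y w : ℕ → Fin n → ℝ) (N : ℕ)
    (hden : ∀ j < N, w j ⬝ᵥ (H j *ᵥ y j) ≠ 0)
    (hH : ∀ j < N, H (j + 1) = H j -
      (w j ⬝ᵥ (H j *ᵥ y j))⁻¹ • vecMulVec (H j *ᵥ y j) (w j ᵥ* H j)) :
    ∀ k ≤ N, ∃ X : Matrix (Fin k) (Fin k) ℝ,
      X * ((Matrix.of fun (j : Fin k) a => w j a) * H 0 * (Matrix.of fun a (j : Fin k) => y j a)) = 1 ∧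
      H k = H 0 - H 0 * (Matrix.of fun a (j : Fin k) => y j a) * X *
        (Matrix.of fun (j : Fin k) a => w j a) * H 0 := by
  intro k
  induction k with
  | zero =>
    intro _
    refine ⟨1, Subsingleton.elim _ _, ?_⟩
    rw [Subsingleton.elim (Matrix.of fun a (j : Fin 0) => y j a) 0]
    simp
  | succ k ih =>
    intro hk
    obtain ⟨X, hX, hHk⟩ := ih (by omega)
    have hd := hden k (by omega)
    obtain ⟨X', h1, h2⟩ := abaffian_block_step (H 0) _ _ X
      (replicateCol (Fin 1) (y k)) (replicateRow (Fin 1) (w k)) _ hd hX (H k) hHk (by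
        ext p q
        rw [Subsingleton.elim p q]
        rw [Matrix.mul_assoc]
        simp [Matrix.mul_apply, dotProduct, mulVec])
    have e1 : fromCols (Matrix.of fun a (j : Fin k) => y j a) (replicateCol (Fin 1) (y k)) =
        (Matrix.of fun a (j : Fin (k + 1)) => y j a).submatrix id finSumFinEquiv := by
      ext a (j | j) <;> simp
    have e2 : fromRows (Matrix.of fun (j : Fin k) a => w j a) (replicateRow (Fin 1) (w k)) =
        (Matrix.of fun (j : Fin (k + 1)) a => w j a).submatrix finSumFinEquiv id := by
      ext (j | j) a <;> simp
    obtain ⟨Z, rfl⟩ : ∃ Z : Matrix (Fin (k + 1)) (Fin (k + 1)) ℝ,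
        X' = Z.submatrix finSumFinEquiv finSumFinEquiv :=
      ⟨X'.submatrix finSumFinEquiv.symm finSumFinEquiv.symm, by ext; simp⟩
    have s0 : H 0 = (H 0).submatrix id (Equiv.refl _) := by simp
    rw [e1, e2] at h1 h2
    refine ⟨Z, ?_, ?_⟩
    · have e3 : ∀ (P : Matrix (Fin (k+1)) (Fin n) ℝ) (Q : Matrix (Fin n) (Fin (k+1)) ℝ),
          P.submatrix (finSumFinEquiv (m := k) (n := 1)) id * H 0 *
            Q.submatrix id (finSumFinEquiv (m := k) (n := 1)) =
          (P * H 0 * Q).submatrix finSumFinEquiv finSumFinEquiv := fun P Q => rfl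
      rw [e3, submatrix_mul_equiv] at h1
      have := congrArg (fun M => M.submatrix finSumFinEquiv.symm finSumFinEquiv.symm) h1
      simpa using this
    · have e4 : ∀ (P : Matrix (Fin (k+1)) (Fin n) ℝ) (Q : Matrix (Fin n) (Fin (k+1)) ℝ),
          H 0 * Q.submatrix id (finSumFinEquiv (m := k) (n := 1)) *
            Z.submatrix (finSumFinEquiv (m := k) (n := 1)) (finSumFinEquiv (m := k) (n := 1)) *
            P.submatrix (finSumFinEquiv (m := k) (n := 1)) id =
          H 0 * Q * Z * P := by
        intro P Q
        have : H 0 * Q.submatrix id (finSumFinEquiv (m := k) (n := 1)) =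
          (H 0 * Q).submatrix id (finSumFinEquiv (m := k) (n := 1)) := rfl
        rw [this, submatrix_mul_equiv, submatrix_mul_equiv, submatrix_id_id]
      rw [e4] at h2
      rw [hH k (by omega), ← h2]
      congr 2
      ext p q
      simp [Matrix.mul_apply, vecMulVec, mulVec, vecMul, dotProduct]


/-- Under the Abaffian recursion carried out through step `i` (0-indexed: `H 0 = H₁`
and the recursion hypotheses hold for all steps `j ≤ i`), with
`V_i = (v₁,…,v_i)` and `W_i = (w₁,…,w_i)`, the matrix `W_iᵀ H₁ Aᵀ V_i` is
invertible and `H_{i+1} = H₁ − H₁ Aᵀ V_i (W_iᵀ H₁ Aᵀ V_i)⁻¹ W_iᵀ H₁`. -/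
theorem abaffian_explicit_representation
    (m n : ℕ) (hmn : m ≤ n)
    (A : Matrix (Fin m) (Fin n) ℝ)
    (H : ℕ → Matrix (Fin n) (Fin n) ℝ)
    (v : Fin m → Fin m → ℝ) (w : Fin m → Fin n → ℝ)
    (i : Fin m)
    (hH0 : IsUnit (H 0).det)
    (hHden : ∀ j : Fin m, j ≤ i → w j ⬝ᵥ (H ↑j *ᵥ (Aᵀ *ᵥ v j)) ≠ 0)
    (hH : ∀ j : Fin m, j ≤ i →
      H (↑j + 1) = H ↑j -
        (w j ⬝ᵥ (H ↑j *ᵥ (Aᵀ *ᵥ v j)))⁻¹ •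
          vecMulVec (H ↑j *ᵥ (Aᵀ *ᵥ v j)) (w j ᵥ* H ↑j)) :
    ∀ (V : Matrix (Fin m) (Fin (↑i + 1)) ℝ) (W : Matrix (Fin n) (Fin (↑i + 1)) ℝ),
      V = Matrix.of (fun a j => v (Fin.castLE i.2 j) a) →
      W = Matrix.of (fun a j => w (Fin.castLE i.2 j) a) →
      IsUnit (Wᵀ * H 0 * Aᵀ * V).det ∧
      H (↑i + 1) = H 0 - H 0 * Aᵀ * V * (Wᵀ * H 0 * Aᵀ * V)⁻¹ * Wᵀ * H 0 := by

  intro V W hV hW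
  have key := abaffian_seq H (fun j => if h : j < m then Aᵀ *ᵥ v ⟨j, h⟩ else 0)
    (fun j => if h : j < m then w ⟨j, h⟩ else 0) (↑i + 1)
    (by
      intro j hj
      have hjm : j < m := by omega
      simpa [hjm] using hHden ⟨j, hjm⟩ (Fin.le_def.2 (by simp; omega)))
    (by
      intro j hj
      have hjm : j < m := by omega
      simpa [hjm] using hH ⟨j, hjm⟩ (Fin.le_def.2 (by simp; omega)))
    (↑i + 1) le_rfl
  obtain ⟨X, hX, hHk⟩ := key
  have eW : (Matrix.of fun (j : Fin (↑i + 1)) a =>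
      (if h : (j : ℕ) < m then w ⟨j, h⟩ else 0) a) = Wᵀ := by
    ext j a
    have hjm : (j : ℕ) < m := by omega
    simp [hW, hjm, Fin.castLE]
  have eV : (Matrix.of fun a (j : Fin (↑i + 1)) =>
      (if h : (j : ℕ) < m then Aᵀ *ᵥ v ⟨j, h⟩ else 0) a) = Aᵀ * V := by
    ext a j
    have hjm : (j : ℕ) < m := by omega
    simp [hV, hjm, Fin.castLE, Matrix.mul_apply, mulVec, dotProduct]
  rw [eW, eV, ← Matrix.mul_assoc (Wᵀ * H 0)] at hX
  rw [eW, eV, ← Matrix.mul_assoc] at hHk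
  refine ⟨Matrix.isUnit_det_of_left_inverse hX, ?_⟩
  rw [Matrix.inv_eq_left_inv hX]
  exact hHk
end

section
/- Let A be a real m×n matrix with m ≤ n, H₁ ∈ ℝ^{n×n} nonsingular, V = (v₁,…,v_m) ∈ ℝ^{m×m}, W = (w₁,…,w_m) ∈ ℝ^{n×m}, and let Q = Vᵀ A H₁ᵀ W ∈ ℝ^{m×m}. Then the Abaffian recursion defined by these parameters is well defined for all m steps (i.e. one can successively form H₂,…,H_{m+1} with w_iᵀ H_i Aᵀ v_i ≠ 0 for every i = 1,…,m) if and only if Q is strongly nonsingular, i.e. for every k = 1,…,m the leading principal k×k submatrix of Q is nonsingular. -/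
open Matrix


lemma abaff_det_pivots (k : ℕ) : ∀ (M : ℕ → ℕ → ℕ → ℝ),
    (∀ j < k, M j j j ≠ 0) →
    (∀ j < k, ∀ a b, M (j+1) a b = M j a b - (M j j j)⁻¹ * (M j j b * M j a j)) →
    (Matrix.of fun a b : Fin (k+1) => M 0 a b).det = ∏ j ∈ Finset.range (k+1), M j j j := by
  induction k with
  | zero => intro M _ _; simp
  | succ k ih =>
    intro M hp hr
    have h := ih (fun j a b => M (j+1) (a+1) (b+1)) (fun j hj => hp (j+1) (by omega))
      (fun j hj a b => hr (j+1) (by omega) (a+1) (b+1))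
    rw [Finset.prod_range_succ', ← h]
    have h0 := hp 0 (by omega)
    let N : Matrix (Fin (k+2)) (Fin (k+2)) ℝ :=
      Matrix.of fun a b => if a = 0 then M 0 0 b else M 1 a b
    have hN : (Matrix.of fun a b : Fin (k+2) => M 0 a b).det = N.det := by
      apply Matrix.det_eq_of_forall_row_eq_smul_add_const
        (fun a : Fin (k+2) => if a = 0 then 0 else (M 0 0 0)⁻¹ * M 0 a 0) 0 (by simp)
      intro a b
      by_cases ha : a = 0
      · simp [N, ha]
      · have := hr 0 (by omega) a b
        simp only [zero_add] at this
        simp [N, ha, this]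
        ring
    rw [hN, Matrix.det_succ_column_zero, Fin.sum_univ_succ, Finset.sum_eq_zero]
    · have : N.submatrix (Fin.succAbove 0) Fin.succ =
        Matrix.of fun a b : Fin (k+1) => M (0+1) (a+1) (b+1) := by
        ext a b
        simp [N]
      rw [this]
      simp [N, mul_comm]
    · intro i _
      have := hr 0 (by omega) (i+1) 0
      simp only [zero_add] at this
      have h2 : N i.succ 0 = 0 := by
        simp [N, this]
        field_simp
        simp
      simp [h2]

lemma abaff_step {n : ℕ} (H : Matrix (Fin n) (Fin n) ℝ) (c : ℝ) (w x y z : Fin n → ℝ) :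
    y ⬝ᵥ ((H - c • vecMulVec (H *ᵥ x) (w ᵥ* H)) *ᵥ z) =
      y ⬝ᵥ (H *ᵥ z) - c * ((y ⬝ᵥ (H *ᵥ x)) * (w ⬝ᵥ (H *ᵥ z))) := by
  rw [Matrix.sub_mulVec, Matrix.smul_mulVec, Matrix.vecMulVec_mulVec, dotProduct_sub,
    dotProduct_smul, dotProduct_mulVec w]
  simp [mul_comm]

lemma abaff_det {m n : ℕ} (A : Matrix (Fin m) (Fin n) ℝ) (H : ℕ → Matrix (Fin n) (Fin n) ℝ)
    (v : Fin m → Fin m → ℝ) (w : Fin m → Fin n → ℝ) (k : Fin m)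
    (hp : ∀ i : Fin m, i < k → w i ⬝ᵥ (H ↑i *ᵥ (Aᵀ *ᵥ v i)) ≠ 0)
    (hr : ∀ i : Fin m, i < k → H (↑i + 1) = H ↑i -
          (w i ⬝ᵥ (H ↑i *ᵥ (Aᵀ *ᵥ v i)))⁻¹ •
            vecMulVec (H ↑i *ᵥ (Aᵀ *ᵥ v i)) (w i ᵥ* H ↑i)) :
    ∃ c : ℝ, c ≠ 0 ∧ (((Matrix.of fun a j => v j a)ᵀ * A * (H 0)ᵀ *
      (Matrix.of fun a j => w j a)).submatrix (Fin.castLE k.2) (Fin.castLE k.2)).det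
      = c * (w k ⬝ᵥ (H ↑k *ᵥ (Aᵀ *ᵥ v k))) := by
  let v' : ℕ → Fin m → ℝ := fun i => if h : i < m then v ⟨i, h⟩ else 0
  let w' : ℕ → Fin n → ℝ := fun i => if h : i < m then w ⟨i, h⟩ else 0
  have hv : ∀ i : Fin m, v' i = v i := fun i => by simp [v']
  have hw : ∀ i : Fin m, w' i = w i := fun i => by simp [w']
  let M : ℕ → ℕ → ℕ → ℝ := fun j a b => w' b ⬝ᵥ (H j *ᵥ (Aᵀ *ᵥ v' a))
  have hM : ∀ i : Fin m, M i i i = w i ⬝ᵥ (H ↑i *ᵥ (Aᵀ *ᵥ v i)) := fun i => by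
    simp only [M, hv, hw]
  have hpM : ∀ j < (k : ℕ), M j j j ≠ 0 := by
    intro j hj
    have := hp ⟨j, hj.trans k.2⟩ hj
    rw [← hM] at this
    exact this
  have key := abaff_det_pivots k M hpM (by
    intro j hj a b
    have h1 := hr ⟨j, hj.trans k.2⟩ hj
    rw [← hM, ← hv, ← hw] at h1
    simp only at h1
    change w' b ⬝ᵥ (H (j+1) *ᵥ (Aᵀ *ᵥ v' a)) = _
    rw [h1, abaff_step])
  refine ⟨∏ j ∈ Finset.range k, M j j j, Finset.prod_ne_zero_iff.2 fun j hj =>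
    hpM j (Finset.mem_range.1 hj), ?_⟩
  rw [← hM, ← Finset.prod_range_succ, ← key]
  congr 1
  ext a b
  have ha := hv (Fin.castLE k.2 a)
  have hb := hw (Fin.castLE k.2 b)
  simp only [Fin.val_castLE] at ha hb
  simp only [M, Matrix.of_apply, Matrix.submatrix_apply, ha, hb]
  rw [dotProduct_comm, Matrix.mulVec_transpose, ← Matrix.vecMul_transpose, Matrix.vecMul_vecMul,
    Matrix.mul_apply, Matrix.mul_assoc (_ᵀ)]
  rfl

/-- The parameter matrices `H₁, V, W` are admissible for the Abaffian recursion
(i.e. all `m` steps can be carried out with nonzero denominators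
`w_iᵀ H_i Aᵀ v_i ≠ 0`) iff the matrix `Q = Vᵀ A H₁ᵀ W` is strongly nonsingular,
i.e. every leading principal submatrix of `Q` is nonsingular. -/
theorem abaffian_well_defined_iff_strongly_nonsingular
    (m n : ℕ) (hmn : m ≤ n)
    (A : Matrix (Fin m) (Fin n) ℝ)
    (H1 : Matrix (Fin n) (Fin n) ℝ) (hH1 : IsUnit H1.det)
    (v : Fin m → Fin m → ℝ) (w : Fin m → Fin n → ℝ)
    (V : Matrix (Fin m) (Fin m) ℝ) (hV : V = Matrix.of fun a j => v j a)
    (W : Matrix (Fin n) (Fin m) ℝ) (hW : W = Matrix.of fun a j => w j a)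
    (Q : Matrix (Fin m) (Fin m) ℝ) (hQ : Q = Vᵀ * A * H1ᵀ * W) :
    (∃ H : ℕ → Matrix (Fin n) (Fin n) ℝ, H 0 = H1 ∧
      ∀ i : Fin m,
        w i ⬝ᵥ (H ↑i *ᵥ (Aᵀ *ᵥ v i)) ≠ 0 ∧
        H (↑i + 1) = H ↑i -
          (w i ⬝ᵥ (H ↑i *ᵥ (Aᵀ *ᵥ v i)))⁻¹ •
            vecMulVec (H ↑i *ᵥ (Aᵀ *ᵥ v i)) (w i ᵥ* H ↑i)) ↔
    (∀ k : Fin m, IsUnit (Q.submatrix (Fin.castLE k.2) (Fin.castLE k.2)).det) := by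
  subst hV hW hQ
  constructor
  · rintro ⟨H, rfl, h⟩ k
    obtain ⟨c, hc, hd⟩ := abaff_det A H v w k (fun i _ => (h i).1) (fun i _ => (h i).2)
    rw [hd]
    exact (mul_ne_zero hc (h k).1).isUnit
  · intro h
    let H : ℕ → Matrix (Fin n) (Fin n) ℝ := fun j => Nat.rec H1 (fun i X =>
      if hi : i < m then X - (w ⟨i, hi⟩ ⬝ᵥ (X *ᵥ (Aᵀ *ᵥ v ⟨i, hi⟩)))⁻¹ •
            vecMulVec (X *ᵥ (Aᵀ *ᵥ v ⟨i, hi⟩)) (w ⟨i, hi⟩ ᵥ* X) else 0) j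
    have hr : ∀ i : Fin m, H (↑i + 1) = H ↑i -
          (w i ⬝ᵥ (H ↑i *ᵥ (Aᵀ *ᵥ v i)))⁻¹ •
            vecMulVec (H ↑i *ᵥ (Aᵀ *ᵥ v i)) (w i ᵥ* H ↑i) := fun i => dif_pos i.2
    refine ⟨H, rfl, fun i => ⟨?_, hr i⟩⟩
    induction i using WellFoundedLT.induction with
    | ind i ih =>
      obtain ⟨c, hc, hd⟩ := abaff_det A H v w i ih (fun i _ => hr i)
      have h1 := (h i).ne_zero
      intro h0
      rw [h0, mul_zero] at hd
      exact h1 hd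
end

section
/- Consider the integer Abaffian recursion: A ∈ ℤ^{m×n} with m ≤ n, v₁,…,v_m ∈ ℤ^m, H₁ ∈ ℤ^{n×n} unimodular, and for i = 1,…,m suppose s_i = H_i Aᵀ v_i is a nonzero integer vector, δ_i = gcd of the entries of s_i, and w_i ∈ ℤⁿ satisfies w_iᵀ s_i = δ_i, with H_{i+1} = H_i − (s_i)(w_iᵀ H_i)/δ_i. Then every Abaffian H₂,…,H_{m+1} generated by this recursion is a well-defined matrix with integer entries. -/
open Matrix

/-- **Integer Abaffian recursion.** With `A ∈ ℤ^{m×n}`, integer scaling vectors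
`v_i`, a unimodular `H₁` (here `H 0 = H₁`, viewed in `ℚ`), nonzero integer vectors
`s_i = H_i Aᵀ v_i`, `δ_i = gcd(s_i)`, and integer vectors `w_i` with
`w_iᵀ s_i = δ_i`, the recursion `H_{i+1} = H_i − s_i (w_iᵀ H_i)/δ_i` is well
defined (`δ_i ≠ 0`) and every Abaffian `H₂,…,H_{m+1}` has integer entries. -/
theorem integer_abaffian_integrality
    (m n : ℕ) (hmn : m ≤ n)
    (A : Matrix (Fin m) (Fin n) ℤ)
    (v : Fin m → Fin m → ℤ)
    (H1 : Matrix (Fin n) (Fin n) ℤ) (hH1 : IsUnit H1.det)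
    (H : ℕ → Matrix (Fin n) (Fin n) ℚ)
    (hH0 : H 0 = H1.map (Int.cast : ℤ → ℚ))
    (s : Fin m → Fin n → ℤ)
    (hs : ∀ i : Fin m,
      (fun a => ((s i a : ℤ) : ℚ)) =
        H ↑i *ᵥ ((A.map (Int.cast : ℤ → ℚ))ᵀ *ᵥ fun k => ((v i k : ℤ) : ℚ)))
    (hs0 : ∀ i : Fin m, s i ≠ 0)
    (w : Fin m → Fin n → ℤ)
    (hw : ∀ i : Fin m, w i ⬝ᵥ s i = Finset.univ.gcd (s i))
    (hH : ∀ i : Fin m,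
      H (↑i + 1) = H ↑i -
        (((Finset.univ.gcd (s i) : ℤ) : ℚ))⁻¹ •
          vecMulVec (fun a => ((s i a : ℤ) : ℚ))
            ((fun k => ((w i k : ℤ) : ℚ)) ᵥ* H ↑i)) :
    (∀ i : Fin m, Finset.univ.gcd (s i) ≠ 0) ∧
    (∀ i : ℕ, i ≤ m → ∀ a b : Fin n, ∃ c : ℤ, H i a b = (c : ℚ)) := by
  have hδ : ∀ i : Fin m, Finset.univ.gcd (s i) ≠ 0 := by
    intro i h
    apply hs0 i
    funext a
    exact Finset.gcd_eq_zero_iff.mp h a (Finset.mem_univ a)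
  refine ⟨hδ, ?_⟩
  intro i
  induction i with
  | zero =>
    intro _ a b
    exact ⟨H1 a b, by rw [hH0]; rfl⟩
  | succ j ih =>
    intro hj a b
    have ih' := ih (by omega)
    choose G hG using ih'
    have h := hH ⟨j, by omega⟩
    have hd := hδ ⟨j, by omega⟩
    obtain ⟨t, ht⟩ := Finset.gcd_dvd (f := s ⟨j, by omega⟩) (Finset.mem_univ a)
    generalize Finset.univ.gcd (s ⟨j, by omega⟩) = d at h hd ht
    have hdq : (d : ℚ) ≠ 0 := by exact_mod_cast hd
    refine ⟨G a b - t * ∑ k, w ⟨j, by omega⟩ k * G k b, ?_⟩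
    simp only at h
    rw [h]
    simp only [Matrix.sub_apply, Matrix.smul_apply, vecMulVec_apply, vecMul, dotProduct, hG, ht,
      smul_eq_mul]
    push_cast
    field_simp
end

section
/- Consider the integer Abaffian recursion: A ∈ ℤ^{m×n} with m ≤ n, v₁,…,v_m ∈ ℤ^m, H₁ ∈ ℤ^{n×n} unimodular, and for i = 1,…,m suppose s_i = H_i Aᵀ v_i is a nonzero integer vector, δ_i = gcd of the entries of s_i, and w_i ∈ ℤⁿ satisfies w_iᵀ s_i = δ_i, with H_{i+1} = H_i − (s_i)(w_iᵀ H_i)/δ_i. Let b ∈ ℤ^m and fix i with 1 ≤ i ≤ m. If y ∈ ℤⁿ satisfies vⱼᵀ A y = vⱼᵀ b for j = 1,…,i, then every x ∈ ℤⁿ satisfying vⱼᵀ A x = vⱼᵀ b for j = 1,…,i can be written as x = y + H_{i+1}ᵀ q for some integer vector q ∈ ℤⁿ. -/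
open Matrix

/-- **Integer Abaffian recursion: representation of all integer solutions.**
Under the integer Abaffian recursion carried out through step `i` (0-indexed,
`H 0 = H₁`), if `y ∈ ℤⁿ` satisfies the first `i` scaled equations
`vⱼᵀ A y = vⱼᵀ b`, then every integer solution `x` of these equations can be
written as `x = y + H_{i+1}ᵀ q` for some integer vector `q`. -/
theorem integer_abaffian_general_solution
    (m n : ℕ) (hmn : m ≤ n)
    (A : Matrix (Fin m) (Fin n) ℤ) (b : Fin m → ℤ)
    (v : Fin m → Fin m → ℤ)
    (H1 : Matrix (Fin n) (Fin n) ℤ) (hH1 : IsUnit H1.det)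
    (H : ℕ → Matrix (Fin n) (Fin n) ℚ)
    (hH0 : H 0 = H1.map (Int.cast : ℤ → ℚ))
    (s : Fin m → Fin n → ℤ)
    (i : Fin m)
    (hs : ∀ j : Fin m, j ≤ i →
      (fun a => ((s j a : ℤ) : ℚ)) =
        H ↑j *ᵥ ((A.map (Int.cast : ℤ → ℚ))ᵀ *ᵥ fun k => ((v j k : ℤ) : ℚ)))
    (hs0 : ∀ j : Fin m, j ≤ i → s j ≠ 0)
    (w : Fin m → Fin n → ℤ)
    (hw : ∀ j : Fin m, j ≤ i → w j ⬝ᵥ s j = Finset.univ.gcd (s j))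
    (hH : ∀ j : Fin m, j ≤ i →
      H (↑j + 1) = H ↑j -
        (((Finset.univ.gcd (s j) : ℤ) : ℚ))⁻¹ •
          vecMulVec (fun a => ((s j a : ℤ) : ℚ))
            ((fun k => ((w j k : ℤ) : ℚ)) ᵥ* H ↑j)) :
    ∀ y x : Fin n → ℤ,
      (∀ j : Fin m, j ≤ i → v j ⬝ᵥ (A *ᵥ y) = v j ⬝ᵥ b) →
      (∀ j : Fin m, j ≤ i → v j ⬝ᵥ (A *ᵥ x) = v j ⬝ᵥ b) →
      ∃ q : Fin n → ℤ,
        (fun a => ((x a : ℤ) : ℚ)) =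
          (fun a => ((y a : ℤ) : ℚ)) + (H (↑i + 1))ᵀ *ᵥ fun a => ((q a : ℤ) : ℚ) := by
  intro y x hy hx
  set d : Fin n → ℤ := x - y with hd
  have hAd : ∀ j : Fin m, j ≤ i → v j ⬝ᵥ (A *ᵥ d) = 0 := by
    intro j hj
    rw [hd, mulVec_sub, dotProduct_sub, hx j hj, hy j hj, sub_self]
  have hT : IsUnit (H1ᵀ).det := by rwa [det_transpose]
  set q : Fin n → ℤ := (H1ᵀ)⁻¹ *ᵥ d with hq
  have hq0 : H1ᵀ *ᵥ q = d := by
    rw [hq, mulVec_mulVec, mul_nonsing_inv _ hT, one_mulVec]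
  have key : ∀ k : ℕ, k ≤ (i : ℕ) + 1 →
      (H k)ᵀ *ᵥ (fun a => ((q a : ℤ) : ℚ)) = fun a => ((d a : ℤ) : ℚ) := by
    intro k
    induction k with
    | zero =>
      intro _
      rw [hH0, ← hq0]
      ext a
      simp [mulVec, dotProduct]
    | succ k ih =>
      intro hk
      have ih := ih (by omega)
      have hkm : k < m := by have := i.2; omega
      have hj : (⟨k, hkm⟩ : Fin m) ≤ i := by
        rw [Fin.le_def]; simp only; omega
      have h1 := hH ⟨k, hkm⟩ hj
      have h2 := hs ⟨k, hkm⟩ hj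
      have h3 := hAd ⟨k, hkm⟩ hj
      simp only at h1 h2
      have hz : (fun a => ((s ⟨k, hkm⟩ a : ℤ) : ℚ)) ⬝ᵥ (fun a => ((q a : ℤ) : ℚ)) = 0 := by
        rw [h2, dotProduct_comm, dotProduct_mulVec, ← mulVec_transpose, ih,
          dotProduct_mulVec, vecMul_transpose, dotProduct_comm]
        have h4 := congrArg (Int.cast : ℤ → ℚ) h3
        simpa [mulVec, dotProduct] using h4
      rw [h1, transpose_sub, sub_mulVec, ih, transpose_smul, smul_mulVec, transpose_vecMulVec,
        vecMulVec_mulVec, hz]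
      simp
  refine ⟨q, ?_⟩
  rw [key _ le_rfl]
  ext a
  simp [hd]
end

section
/- Consider the integer Abaffian recursion: A ∈ ℤ^{m×n} with m ≤ n, linearly independent v₁,…,v_m ∈ ℤ^m, H₁ ∈ ℤ^{n×n} unimodular, and for i = 1,…,m suppose s_i = H_i Aᵀ v_i is a nonzero integer vector, δ_i = gcd of the entries of s_i, and w_i, z_i ∈ ℤⁿ satisfy w_iᵀ s_i = δ_i and z_iᵀ s_i = δ_i, with H_{i+1} = H_i − (s_i)(w_iᵀ H_i)/δ_i. Let b ∈ ℤ^m, let x₁ ∈ ℤⁿ, and define the (rational) iterates x_{i+1} = x_i − (v_iᵀ(A x_i − b)/δ_i) H_iᵀ z_i for i = 1,…,m. Then the system A x = b has a solution x ∈ ℤⁿ if and only if for every i = 1,…,m the rational number v_iᵀ(A x_i − b)/δ_i is an integer. -/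
open Matrix

theorem abs_cast_mulVec {p q : ℕ} (M : Matrix (Fin p) (Fin q) ℤ) (u : Fin q → ℤ) :
    (M.map (Int.cast : ℤ → ℚ)) *ᵥ (fun k => ((u k : ℤ) : ℚ)) =
      fun k => (((M *ᵥ u) k : ℤ) : ℚ) := by
  funext k
  simp [mulVec, dotProduct]

theorem abs_cast_vecMul {p q : ℕ} (M : Matrix (Fin p) (Fin q) ℤ) (u : Fin p → ℤ) :
    (fun k => ((u k : ℤ) : ℚ)) ᵥ* (M.map (Int.cast : ℤ → ℚ)) =
      fun k => (((u ᵥ* M) k : ℤ) : ℚ) := by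
  funext k
  simp [vecMul, dotProduct]

theorem abs_cast_residual {m n : ℕ} (A : Matrix (Fin m) (Fin n) ℤ) (b v : Fin m → ℤ)
    (X : Fin n → ℤ) :
    ((fun k => ((v k : ℤ) : ℚ)) ⬝ᵥ
      ((A.map (Int.cast : ℤ → ℚ)) *ᵥ (fun a => ((X a : ℤ) : ℚ)) - fun k => ((b k : ℤ) : ℚ)))
      = ((v ⬝ᵥ (A *ᵥ X - b) : ℤ) : ℚ) := by
  rw [abs_cast_mulVec]
  simp [dotProduct]

/-- **Integer solvability test of the ABS algorithm for Diophantine systems.**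
Under the integer Abaffian recursion (`H 0 = H₁` unimodular, linearly independent
integer scaling vectors `v_i`, nonzero integer vectors `s_i = H_i Aᵀ v_i`,
`δ_i = gcd(s_i)`, integer `w_i, z_i` with `w_iᵀ s_i = z_iᵀ s_i = δ_i`), with
integer starting point `x₁` and rational iterates
`x_{i+1} = x_i − (v_iᵀ(A x_i − b)/δ_i) H_iᵀ z_i`, the system `A x = b` has an
integer solution iff every ratio `v_iᵀ(A x_i − b)/δ_i` is an integer. -/
theorem integer_abaffian_solvability_criterion
    (m n : ℕ) (hmn : m ≤ n)
    (A : Matrix (Fin m) (Fin n) ℤ) (b : Fin m → ℤ)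
    (v : Fin m → Fin m → ℤ) (hv : LinearIndependent ℤ v)
    (H1 : Matrix (Fin n) (Fin n) ℤ) (hH1 : IsUnit H1.det)
    (H : ℕ → Matrix (Fin n) (Fin n) ℚ)
    (hH0 : H 0 = H1.map (Int.cast : ℤ → ℚ))
    (s : Fin m → Fin n → ℤ)
    (hs : ∀ i : Fin m,
      (fun a => ((s i a : ℤ) : ℚ)) =
        H ↑i *ᵥ ((A.map (Int.cast : ℤ → ℚ))ᵀ *ᵥ fun k => ((v i k : ℤ) : ℚ)))
    (hs0 : ∀ i : Fin m, s i ≠ 0)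
    (w z : Fin m → Fin n → ℤ)
    (hw : ∀ i : Fin m, w i ⬝ᵥ s i = Finset.univ.gcd (s i))
    (hz : ∀ i : Fin m, z i ⬝ᵥ s i = Finset.univ.gcd (s i))
    (hH : ∀ i : Fin m,
      H (↑i + 1) = H ↑i -
        (((Finset.univ.gcd (s i) : ℤ) : ℚ))⁻¹ •
          vecMulVec (fun a => ((s i a : ℤ) : ℚ))
            ((fun k => ((w i k : ℤ) : ℚ)) ᵥ* H ↑i))
    (x : ℕ → Fin n → ℚ) (x1 : Fin n → ℤ)
    (hx0 : x 0 = fun a => ((x1 a : ℤ) : ℚ))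
    (hx : ∀ i : Fin m,
      x (↑i + 1) = x ↑i -
        (((fun k => ((v i k : ℤ) : ℚ)) ⬝ᵥ
            ((A.map (Int.cast : ℤ → ℚ)) *ᵥ x ↑i - fun k => ((b k : ℤ) : ℚ))) /
          ((Finset.univ.gcd (s i) : ℤ) : ℚ)) •
          ((H ↑i)ᵀ *ᵥ fun a => ((z i a : ℤ) : ℚ))) :
    (∃ y : Fin n → ℤ, A *ᵥ y = b) ↔
    (∀ i : Fin m, ∃ t : ℤ,
      ((fun k => ((v i k : ℤ) : ℚ)) ⬝ᵥ
          ((A.map (Int.cast : ℤ → ℚ)) *ᵥ x ↑i - fun k => ((b k : ℤ) : ℚ))) /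
        ((Finset.univ.gcd (s i) : ℤ) : ℚ) = (t : ℚ)) := by
  classical
  have hd : ∀ i, Finset.univ.gcd (s i) ≠ 0 := by
    intro i h
    apply hs0 i
    funext a
    exact Finset.gcd_eq_zero_iff.1 h a (Finset.mem_univ a)
  have hdQ : ∀ i, ((Finset.univ.gcd (s i) : ℤ) : ℚ) ≠ 0 := fun i => Int.cast_ne_zero.2 (hd i)
  -- integrality of the Abaffians, their null vectors and their row lattices
  have inv : ∀ i : ℕ, i ≤ m → ∃ G : Matrix (Fin n) (Fin n) ℤ,
      H i = G.map (Int.cast : ℤ → ℚ) ∧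
      (∀ j : Fin m, (j : ℕ) < i → G *ᵥ (Aᵀ *ᵥ v j) = 0) ∧
      (∀ d : Fin n → ℤ, (∀ j : Fin m, (j : ℕ) < i → (Aᵀ *ᵥ v j) ⬝ᵥ d = 0) →
        ∃ u : Fin n → ℤ, d = u ᵥ* G) := by
    intro i
    induction i with
    | zero =>
      intro _
      refine ⟨H1, hH0, fun j hj => absurd hj (Nat.not_lt_zero _), fun d _ => ⟨d ᵥ* H1⁻¹, ?_⟩⟩
      rw [vecMul_vecMul, nonsing_inv_mul _ hH1, vecMul_one]
    | succ i ih =>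
      intro hi
      obtain ⟨G, hG, hnull, hrow⟩ := ih (by omega)
      let I : Fin m := ⟨i, hi⟩
      have hsI : s I = G *ᵥ (Aᵀ *ᵥ v I) := by
        have h := hs I
        change _ = H i *ᵥ _ at h
        rw [hG, ← transpose_map, abs_cast_mulVec, abs_cast_mulVec] at h
        funext a
        exact_mod_cast congrFun h a
      have hdvd : ∀ a, ∃ q, s I a = Finset.univ.gcd (s I) * q := fun a =>
        Finset.gcd_dvd (Finset.mem_univ a)
      choose q hq using hdvd
      have hsq : s I = Finset.univ.gcd (s I) • q := by
        funext a; simpa using hq a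
      have hwI := hw I
      have hdI := hd I
      have hwq : w I ⬝ᵥ q = 1 := by
        have h := hwI
        generalize Finset.univ.gcd (s I) = D at *
        rw [hsq, dotProduct_smul, smul_eq_mul] at h
        exact mul_left_cancel₀ hdI (by rw [h, mul_one])
      refine ⟨G - vecMulVec q (w I ᵥ* G), ?_, ?_, ?_⟩
      · have h := hH I
        change H (i+1) = H i - _ • vecMulVec _ (_ ᵥ* H i) at h
        rw [h, hG, abs_cast_vecMul]
        ext a c
        have hQ := hdQ I
        have hqa : ((s I a : ℤ) : ℚ) = ((Finset.univ.gcd (s I) : ℤ) : ℚ) * q a := by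
          exact_mod_cast hq a
        simp only [Matrix.sub_apply, Matrix.smul_apply, vecMulVec_apply, map_apply, smul_eq_mul, Int.cast_sub,
          Int.cast_mul, hqa]
        rw [← mul_assoc, inv_mul_cancel_left₀ hQ]
      · intro j hj
        rw [sub_mulVec, vecMulVec_mulVec, ← dotProduct_mulVec]
        rcases Nat.lt_succ_iff_lt_or_eq.1 hj with h | h
        · rw [hnull j h]; simp
        · have : j = I := Fin.ext h
          subst this
          rw [← hsI, hwI]
          funext a
          simp [hq a, mul_comm]
      · intro d hdd
        obtain ⟨u, hu⟩ := hrow d (fun j hj => hdd j (by omega))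
        refine ⟨u, ?_⟩
        have h0 : (Aᵀ *ᵥ v I) ⬝ᵥ d = 0 := hdd I (Nat.lt_succ_self i)
        have h1 : u ⬝ᵥ q = 0 := by
          rw [hu, dotProduct_comm, ← dotProduct_mulVec, ← hsI] at h0
          generalize Finset.univ.gcd (s I) = D at *
          rw [hsq, dotProduct_smul, smul_eq_mul] at h0
          exact (mul_eq_zero.1 h0).resolve_left hdI
        rw [vecMul_sub, vecMul_vecMulVec, h1]
        simpa using hu
  have hsG : ∀ (i : Fin m) (G : Matrix (Fin n) (Fin n) ℤ), H i = G.map (Int.cast : ℤ → ℚ) →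
      s i = G *ᵥ (Aᵀ *ᵥ v i) := by
    intro i G hG
    have h := hs i
    rw [hG, ← transpose_map, abs_cast_mulVec, abs_cast_mulVec] at h
    funext a
    exact_mod_cast congrFun h a
  have hadj : ∀ (j : Fin m) (u : Fin n → ℤ), v j ⬝ᵥ (A *ᵥ u) = (Aᵀ *ᵥ v j) ⬝ᵥ u := by
    intro j u
    rw [dotProduct_mulVec, mulVec_transpose]
  -- integrality of the iterates as long as the ratios are integers
  have xinv : ∀ i : ℕ, i ≤ m →
      (∀ j : Fin m, (j : ℕ) < i → ∃ t : ℤ,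
        ((fun k => ((v j k : ℤ) : ℚ)) ⬝ᵥ
          ((A.map (Int.cast : ℤ → ℚ)) *ᵥ x ↑j - fun k => ((b k : ℤ) : ℚ))) /
        ((Finset.univ.gcd (s j) : ℤ) : ℚ) = (t : ℚ)) →
      ∃ X : Fin n → ℤ, x i = (fun a => ((X a : ℤ) : ℚ)) ∧
        ∀ j : Fin m, (j : ℕ) < i → v j ⬝ᵥ (A *ᵥ X - b) = 0 := by
    intro i
    induction i with
    | zero => exact fun _ _ => ⟨x1, hx0, fun j hj => absurd hj (Nat.not_lt_zero _)⟩
    | succ i ih =>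
      intro hi ht
      obtain ⟨X, hX, hres⟩ := ih (by omega) (fun j hj => ht j (by omega))
      let I : Fin m := ⟨i, hi⟩
      obtain ⟨G, hG, hnull, -⟩ := inv i (by omega)
      obtain ⟨t, htI⟩ := ht I (Nat.lt_succ_self i)
      have hxI := hx I
      rw [htI] at hxI
      change x (i+1) = x i - _ • ((H i)ᵀ *ᵥ _) at hxI
      change (_ ⬝ᵥ (_ *ᵥ x i - _)) / _ = _ at htI
      rw [hX, abs_cast_residual, div_eq_iff (hdQ I)] at htI
      have htZ : v I ⬝ᵥ (A *ᵥ X - b) = t * Finset.univ.gcd (s I) := by exact_mod_cast htI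
      have key : ∀ j, v j ⬝ᵥ (A *ᵥ (X - t • (z I ᵥ* G)) - b) =
          v j ⬝ᵥ (A *ᵥ X - b) - t * (z I ⬝ᵥ (G *ᵥ (Aᵀ *ᵥ v j))) := by
        intro j
        have e : v j ⬝ᵥ (A *ᵥ (z I ᵥ* G)) = z I ⬝ᵥ (G *ᵥ (Aᵀ *ᵥ v j)) := by
          rw [hadj, dotProduct_mulVec, dotProduct_comm]
        rw [← e, mulVec_sub, mulVec_smul, dotProduct_sub, dotProduct_sub, dotProduct_sub,
          dotProduct_smul, smul_eq_mul]
        ring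
      refine ⟨X - t • (z I ᵥ* G), ?_, ?_⟩
      · rw [hxI, hX, hG, mulVec_transpose, abs_cast_vecMul]
        funext a
        simp
      · intro j hj
        rw [key]
        rcases Nat.lt_succ_iff_lt_or_eq.1 hj with h | h
        · rw [hnull j h, hres j h]; simp
        · have : j = I := Fin.ext h
          subst this
          rw [← hsG I G hG, hz I, htZ, sub_self]
  constructor
  · rintro ⟨y, hy⟩
    have main : ∀ k : ℕ, ∀ i : Fin m, (i : ℕ) = k → ∃ t : ℤ,
        ((fun k => ((v i k : ℤ) : ℚ)) ⬝ᵥ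
          ((A.map (Int.cast : ℤ → ℚ)) *ᵥ x ↑i - fun k => ((b k : ℤ) : ℚ))) /
        ((Finset.univ.gcd (s i) : ℤ) : ℚ) = (t : ℚ) := by
      intro k
      induction k using Nat.strong_induction_on with
      | _ k ih =>
        intro i hik
        obtain ⟨X, hX, hres⟩ := xinv i i.2.le (fun j hj => ih j (by omega) j rfl)
        obtain ⟨G, hG, -, hrow⟩ := inv i i.2.le
        have hdiff : ∀ j, v j ⬝ᵥ (A *ᵥ X - b) = (Aᵀ *ᵥ v j) ⬝ᵥ (X - y) := by
          intro j
          rw [← hy, ← mulVec_sub, hadj]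
        obtain ⟨u, hu⟩ := hrow (X - y) (fun j hj => by rw [← hdiff, hres j hj])
        have h1 : v i ⬝ᵥ (A *ᵥ X - b) = u ⬝ᵥ s i := by
          rw [hdiff, hu, dotProduct_comm, ← dotProduct_mulVec, ← hsG i G hG]
        have h2 : Finset.univ.gcd (s i) ∣ u ⬝ᵥ s i :=
          Finset.dvd_sum fun a _ => Dvd.dvd.mul_left (Finset.gcd_dvd (Finset.mem_univ a)) _
        obtain ⟨t, ht⟩ := h2
        refine ⟨t, ?_⟩
        rw [hX, abs_cast_residual, h1, ht, Int.cast_mul, mul_div_cancel_left₀ _ (hdQ i)]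
    exact fun i => main i i rfl
  · intro ht
    obtain ⟨X, -, hres⟩ := xinv m le_rfl (fun j _ => ht j)
    refine ⟨X, ?_⟩
    have hdet : (Matrix.of v).det ≠ 0 := by
      intro h
      obtain ⟨u, hu0, hu⟩ := Matrix.exists_vecMul_eq_zero_iff.2 h
      have hinj : Function.Injective (fun u => u ᵥ* Matrix.of v) :=
        Matrix.vecMul_injective_iff.2 hv
      exact hu0 (hinj (by simpa using hu))
    have h0 : (Matrix.of v) *ᵥ (A *ᵥ X - b) = 0 := by
      funext j
      exact hres j j.2
    exact sub_eq_zero.1 (Matrix.eq_zero_of_mulVec_eq_zero hdet h0)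
end

section
/- Let A ∈ ℝ^{m×n} with m ≤ n have rows a₁,…,a_m, let H₁, Z = (z₁,…,zₙ) ∈ ℝ^{n×n} be nonsingular, and define vectors u_j¹ = H₁ᵀ z_j for j = 1,…,n and, for i = 1,…,m, u_j^{i+1} = u_j^i − (a_iᵀ u_j^i / a_iᵀ u_i^i) u_i^i for j ≥ i+1, assuming a_iᵀ u_i^i ≠ 0 at each step. Let H₁' = Zᵀ H₁ and define the GILU Abaffian recursion H_{i+1}' = H_i' − (H_i' a_i)(e_iᵀ H_i')/(e_iᵀ H_i' a_i), with search vectors p_i = (H_i')ᵀ e_i, where e_i is the i-th unit vector of ℝⁿ. Then for every i = 1,…,m the GILU recursion is well defined with e_iᵀ H_i' a_i = a_iᵀ u_i^i ≠ 0, one has (H_i')ᵀ e_j = u_j^i for all j ≥ i, and in particular p_i = u_i^i. -/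
open Matrix

/-- **Equivalence of the GILU subclass with the vector representation.**
With `u (0) j = H₁ᵀ z_j` (`z_j` the columns of `Z`), the `n−i` vector update
`u_j^{i+1} = u_j^i − (a_iᵀ u_j^i / a_iᵀ u_i^i) u_i^i`, and the GILU Abaffian
recursion started at `H₁' = Zᵀ H₁` (here `H' 0 = H₁'`), for every step `i` the
GILU recursion is well defined with `e_iᵀ H_i' a_i = a_iᵀ u_i^i ≠ 0`, one has
`(H_i')ᵀ e_j = u_j^i` for all `j ≥ i`, and in particular `p_i = u_i^i`. -/
theorem gilu_vector_representation
    (m n : ℕ) (hmn : m ≤ n)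
    (A : Matrix (Fin m) (Fin n) ℝ)
    (H1 Z : Matrix (Fin n) (Fin n) ℝ)
    (hH1 : IsUnit H1.det) (hZ : IsUnit Z.det)
    (u : ℕ → Fin n → (Fin n → ℝ))
    (hu0 : ∀ j : Fin n, u 0 j = H1ᵀ *ᵥ (fun a => Z a j))
    (huden : ∀ i : Fin m, A i ⬝ᵥ u ↑i (Fin.castLE hmn i) ≠ 0)
    (hu : ∀ i : Fin m, ∀ j : Fin n, (i : ℕ) < (j : ℕ) →
      u (↑i + 1) j = u ↑i j -
        ((A i ⬝ᵥ u ↑i j) / (A i ⬝ᵥ u ↑i (Fin.castLE hmn i))) •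
          u ↑i (Fin.castLE hmn i))
    (H' : ℕ → Matrix (Fin n) (Fin n) ℝ)
    (hH'0 : H' 0 = Zᵀ * H1)
    (hH' : ∀ i : Fin m,
      H' (↑i + 1) = H' ↑i -
        ((H' ↑i *ᵥ A i) (Fin.castLE hmn i))⁻¹ •
          vecMulVec (H' ↑i *ᵥ A i) (Pi.single (Fin.castLE hmn i) 1 ᵥ* H' ↑i))
    (p : Fin m → Fin n → ℝ)
    (hp : ∀ i : Fin m, p i = (H' ↑i)ᵀ *ᵥ Pi.single (Fin.castLE hmn i) 1) :
    ∀ i : Fin m,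
      ((H' ↑i *ᵥ A i) (Fin.castLE hmn i) = A i ⬝ᵥ u ↑i (Fin.castLE hmn i) ∧
        (H' ↑i *ᵥ A i) (Fin.castLE hmn i) ≠ 0) ∧
      (∀ j : Fin n, (i : ℕ) ≤ (j : ℕ) → (H' ↑i)ᵀ *ᵥ Pi.single j 1 = u ↑i j) ∧
      p i = u ↑i (Fin.castLE hmn i) := by
  have key : ∀ k : ℕ, k ≤ m → ∀ j : Fin n, k ≤ (j : ℕ) → ∀ l, H' k j l = u k j l := by
    intro k
    induction k with
    | zero =>
      intro _ j _ l
      rw [hu0, hH'0]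
      simp only [Matrix.mul_apply, Matrix.mulVec, dotProduct, Matrix.transpose_apply]
      exact Finset.sum_congr rfl fun x _ => mul_comm _ _
    | succ k ih =>
      intro hk j hj l
      have ih' := ih (by omega)
      have hmv : ∀ j : Fin n, k ≤ (j : ℕ) →
          (H' k *ᵥ A ⟨k, hk⟩) j = A ⟨k, hk⟩ ⬝ᵥ u k j := by
        intro j hj
        have : H' k j = u k j := funext (ih' j hj)
        rw [Matrix.mulVec, dotProduct_comm, this]
      have h1 := hH' ⟨k, hk⟩
      have h2 := hu ⟨k, hk⟩ j (by simpa using hj)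
      simp only at h1 h2
      rw [h1, h2]
      simp only [Matrix.sub_apply, Matrix.smul_apply, Matrix.vecMulVec_apply,
        Pi.sub_apply, Pi.smul_apply, smul_eq_mul, Matrix.single_one_vecMul, Matrix.row_apply]
      rw [hmv j (by omega), hmv _ (by simp), ih' j (by omega), ih' _ (by simp)]
      ring
  intro i
  have key' := key i i.2.le
  have hrow : ∀ j : Fin n, (i : ℕ) ≤ (j : ℕ) → (H' ↑i)ᵀ *ᵥ Pi.single j 1 = u ↑i j := by
    intro j hj
    ext l
    simp [key' j hj l]
  have hd : (H' ↑i *ᵥ A i) (Fin.castLE hmn i) = A i ⬝ᵥ u ↑i (Fin.castLE hmn i) := by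
    have : H' i (Fin.castLE hmn i) = u i (Fin.castLE hmn i) := funext (key' _ (by simp))
    rw [Matrix.mulVec, dotProduct_comm, this]
  exact ⟨⟨hd, hd ▸ huden i⟩, hrow, (hp i).trans (hrow _ (by simp))⟩
end

section
/- Let Y ∈ ℝ^{n×n} be symmetric positive definite and let μ, Λ > 0 satisfy μ‖u‖₂² ≤ uᵀYu ≤ Λ‖u‖₂² for all u ∈ ℝⁿ. Let x*, x_k ∈ ℝⁿ, set e_k = x_k − x*, let p_k ∈ ℝⁿ be nonzero, define x_{k+1} = x_k − (p_kᵀ Y e_k / p_kᵀ Y p_k) p_k and e_{k+1} = x_{k+1} − x*. If γ > 0 satisfies |p_kᵀ Y e_k| ≥ γ ‖p_k‖₂ ‖Y e_k‖₂, then ‖e_{k+1}‖_Y ≤ (1 − γ²·μ/Λ)^{1/2} ‖e_k‖_Y, where ‖u‖_Y = (uᵀ Y u)^{1/2}. -/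
open Matrix

/-- **Linear convergence rate of the truncated ABS iteration (Theorem 4).**
If `Y` is symmetric positive definite with `μ‖u‖₂² ≤ uᵀYu ≤ Λ‖u‖₂²`, the step
`x_{k+1} = x_k − (p_kᵀ Y e_k / p_kᵀ Y p_k) p_k` with a nonzero search vector
`p_k` satisfying the angle condition `|p_kᵀ Y e_k| ≥ γ‖p_k‖₂‖Y e_k‖₂`
contracts the `Y`-weighted error norm by the factor `(1 − γ²μ/Λ)^{1/2}`. -/
theorem truncatedABS_linear_convergence
    (n : ℕ) (Y : Matrix (Fin n) (Fin n) ℝ)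
    (hYsymm : Y.IsSymm) (hYpd : Y.PosDef)
    (μ Λ : ℝ) (hμ : 0 < μ) (hΛ : 0 < Λ)
    (hlow : ∀ u : Fin n → ℝ, μ * (u ⬝ᵥ u) ≤ u ⬝ᵥ (Y *ᵥ u))
    (hhigh : ∀ u : Fin n → ℝ, u ⬝ᵥ (Y *ᵥ u) ≤ Λ * (u ⬝ᵥ u))
    (xstar xk : Fin n → ℝ) (p : Fin n → ℝ) (hp : p ≠ 0)
    (ek : Fin n → ℝ) (hek : ek = xk - xstar)
    (xk1 : Fin n → ℝ)
    (hxk1 : xk1 = xk - ((p ⬝ᵥ (Y *ᵥ ek)) / (p ⬝ᵥ (Y *ᵥ p))) • p)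
    (ek1 : Fin n → ℝ) (hek1 : ek1 = xk1 - xstar)
    (γ : ℝ) (hγ : 0 < γ)
    (hangle : γ * Real.sqrt (p ⬝ᵥ p) * Real.sqrt ((Y *ᵥ ek) ⬝ᵥ (Y *ᵥ ek)) ≤
      |p ⬝ᵥ (Y *ᵥ ek)|) :
    Real.sqrt (ek1 ⬝ᵥ (Y *ᵥ ek1)) ≤
      Real.sqrt (1 - γ ^ 2 * μ / Λ) * Real.sqrt (ek ⬝ᵥ (Y *ᵥ ek)) := by
  have hpp : 0 < p ⬝ᵥ p := by
    have h0 : 0 ≤ p ⬝ᵥ p := Finset.sum_nonneg fun i _ => mul_self_nonneg (p i)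
    exact lt_of_le_of_ne h0 fun h => hp (dotProduct_self_eq_zero.mp h.symm)
  have hWnn : 0 ≤ (Y *ᵥ ek) ⬝ᵥ (Y *ᵥ ek) :=
    Finset.sum_nonneg fun i _ => mul_self_nonneg ((Y *ᵥ ek) i)
  have heenn : 0 ≤ ek ⬝ᵥ ek :=
    Finset.sum_nonneg fun i _ => mul_self_nonneg (ek i)
  have hE : 0 ≤ ek ⬝ᵥ (Y *ᵥ ek) := le_trans (by positivity) (hlow ek)
  have hP : 0 < p ⬝ᵥ (Y *ᵥ p) := lt_of_lt_of_le (by positivity) (hlow p)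
  have hPΛ := hhigh p
  have hsym : ek ⬝ᵥ (Y *ᵥ p) = p ⬝ᵥ (Y *ᵥ ek) := by
    rw [dotProduct_mulVec, ← mulVec_transpose, hYsymm.eq, dotProduct_comm]
  -- `μ E ≤ ‖Y e‖²`
  have hW : μ * (ek ⬝ᵥ (Y *ᵥ ek)) ≤ (Y *ᵥ ek) ⬝ᵥ (Y *ᵥ ek) := by
    have h0 : 0 ≤ (Y *ᵥ ek - μ • ek) ⬝ᵥ (Y *ᵥ ek - μ • ek) :=
      Finset.sum_nonneg fun i _ => mul_self_nonneg ((Y *ᵥ ek - μ • ek) i)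
    simp only [sub_dotProduct, dotProduct_sub, smul_dotProduct, dotProduct_smul,
      smul_eq_mul, dotProduct_comm (Y *ᵥ ek) ek] at h0
    nlinarith [mul_le_mul_of_nonneg_left (hlow ek) hμ.le]
  have hsq : γ ^ 2 * (p ⬝ᵥ p) * ((Y *ᵥ ek) ⬝ᵥ (Y *ᵥ ek)) ≤ (p ⬝ᵥ (Y *ᵥ ek)) ^ 2 := by
    have h := pow_le_pow_left₀ (by positivity) hangle 2
    rwa [sq_abs, mul_pow, mul_pow, Real.sq_sqrt hpp.le, Real.sq_sqrt hWnn] at h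
  have he : ek1 = ek - ((p ⬝ᵥ (Y *ᵥ ek)) / (p ⬝ᵥ (Y *ᵥ p))) • p := by
    rw [hek1, hxk1, hek]; abel
  have hE1 : ek1 ⬝ᵥ (Y *ᵥ ek1) =
      ek ⬝ᵥ (Y *ᵥ ek) - (p ⬝ᵥ (Y *ᵥ ek)) ^ 2 / (p ⬝ᵥ (Y *ᵥ p)) := by
    rw [he]
    generalize hc : (p ⬝ᵥ (Y *ᵥ ek)) / (p ⬝ᵥ (Y *ᵥ p)) = c
    simp only [mulVec_sub, mulVec_smul, sub_dotProduct, dotProduct_sub, smul_dotProduct,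
      dotProduct_smul, smul_eq_mul, hsym]
    rw [← hc]
    field_simp
    ring
  rw [← Real.sqrt_mul' _ hE]
  apply Real.sqrt_le_sqrt
  rw [hE1]
  have key : γ ^ 2 * μ / Λ * (ek ⬝ᵥ (Y *ᵥ ek)) ≤
      (p ⬝ᵥ (Y *ᵥ ek)) ^ 2 / (p ⬝ᵥ (Y *ᵥ p)) := by
    rw [le_div_iff₀ hP]
    calc γ ^ 2 * μ / Λ * (ek ⬝ᵥ (Y *ᵥ ek)) * (p ⬝ᵥ (Y *ᵥ p))
        ≤ γ ^ 2 * μ / Λ * (ek ⬝ᵥ (Y *ᵥ ek)) * (Λ * (p ⬝ᵥ p)) := by gcongr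
      _ = γ ^ 2 * (p ⬝ᵥ p) * (μ * (ek ⬝ᵥ (Y *ᵥ ek))) := by field_simp
      _ ≤ γ ^ 2 * (p ⬝ᵥ p) * ((Y *ᵥ ek) ⬝ᵥ (Y *ᵥ ek)) := by gcongr
      _ ≤ _ := hsq
  linarith
end

section
/- Under the Huang recursion with linearly independent rows a₁,…,a_m, the recursion is well defined with a_iᵀ H_i a_i > 0 for every i, the search vectors are mutually orthogonal (p_iᵀ pⱼ = 0 for j < i), and they coincide with the Gram–Schmidt vectors of a₁,…,a_m: p_i = a_i − Σ_{j<i} (a_iᵀ pⱼ / pⱼᵀ pⱼ) pⱼ for every i = 1,…,m. -/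
open Matrix

/-- **Huang algorithm and Gram–Schmidt.** Under the Huang recursion (`H 0 = I`,
`p_i = H_iᵀ a_i`, `H_{i+1} = H_i − (H_i a_i)(a_iᵀ H_i)/(a_iᵀ H_i a_i)`) applied
to linearly independent rows `a₁,…,a_m`, the recursion is well defined with
`a_iᵀ H_i a_i > 0` for every `i`, the search vectors are mutually orthogonal,
and they coincide with the Gram–Schmidt vectors of `a₁,…,a_m`. -/
theorem huang_gram_schmidt
    (m n : ℕ) (hmn : m ≤ n)
    (a : Fin m → Fin n → ℝ) (ha : LinearIndependent ℝ a)
    (H : ℕ → Matrix (Fin n) (Fin n) ℝ) (hH0 : H 0 = 1)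
    (p : Fin m → Fin n → ℝ)
    (hp : ∀ i : Fin m, p i = (H ↑i)ᵀ *ᵥ a i)
    (hH : ∀ i : Fin m,
      H (↑i + 1) = H ↑i -
        (a i ⬝ᵥ (H ↑i *ᵥ a i))⁻¹ •
          vecMulVec (H ↑i *ᵥ a i) (a i ᵥ* H ↑i)) :
    (∀ i : Fin m, 0 < a i ⬝ᵥ (H ↑i *ᵥ a i)) ∧
    (∀ i j : Fin m, j < i → p i ⬝ᵥ p j = 0) ∧
    (∀ i : Fin m,
      p i = a i - ∑ j ∈ Finset.univ.filter (fun j : Fin m => j < i),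
        ((a i ⬝ᵥ p j) / (p j ⬝ᵥ p j)) • p j) := by
  have inv : ∀ k : ℕ, k ≤ m → (H k)ᵀ = H k ∧ H k * H k = H k ∧
      (∀ j : Fin m, (j : ℕ) < k → H k *ᵥ p j = 0) ∧
      (∀ v, H k *ᵥ v = v - ∑ j ∈ Finset.univ.filter (fun j : Fin m => (j : ℕ) < k),
        ((v ⬝ᵥ p j) / (p j ⬝ᵥ p j)) • p j) := by
    intro k
    induction k with
    | zero => intro _; simp [hH0]
    | succ k ih =>
      intro hk
      obtain ⟨h1, h2, h3, h4⟩ := ih (by omega)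
      obtain ⟨i, rfl⟩ : ∃ i : Fin m, (i : ℕ) = k := ⟨⟨k, by omega⟩, rfl⟩
      have hpi : H i *ᵥ a i = p i := by rw [hp, h1]
      have hpi' : a i ᵥ* H i = p i := by rw [hp, mulVec_transpose]
      have hHp : H i *ᵥ p i = p i := by rw [← hpi, mulVec_mulVec, h2]
      have hpH : p i ᵥ* H i = p i := by rw [← mulVec_transpose, h1, hHp]
      have hap : a i ⬝ᵥ p i = p i ⬝ᵥ p i := by
        conv_lhs => rw [← hHp, dotProduct_mulVec, hpi']
      have hr := hH i
      rw [hpi, hpi', hap] at hr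
      have hmv : ∀ v, H (i + 1) *ᵥ v = H i *ᵥ v - ((v ⬝ᵥ p i) / (p i ⬝ᵥ p i)) • p i := by
        intro v
        rw [hr, sub_mulVec, smul_mulVec, vecMulVec_mulVec, op_smul_eq_smul, smul_smul,
          dotProduct_comm v, div_eq_inv_mul]
      have horth : ∀ j : Fin m, (j : ℕ) < i → p j ⬝ᵥ p i = 0 := by
        intro j hj
        rw [← hpi', dotProduct_comm, ← dotProduct_mulVec, h3 j hj, dotProduct_zero]
      have hpp : H (i + 1) *ᵥ p i = 0 := by
        rw [hmv, hHp]
        by_cases h0 : p i ⬝ᵥ p i = 0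
        · rw [dotProduct_self_eq_zero] at h0
          simp [h0]
        · rw [div_self h0, one_smul, sub_self]
      refine ⟨?_, ?_, ?_, ?_⟩
      · rw [hr, transpose_sub, transpose_smul, transpose_vecMulVec, h1]
      · conv_lhs => enter [2]; rw [hr]
        rw [mul_sub, mul_smul_comm, mul_vecMulVec, hpp, zero_vecMulVec, smul_zero, sub_zero]
        rw [hr, sub_mul, h2, smul_mul_assoc, vecMulVec_mul, hpH]
      · intro j hj
        rcases Nat.lt_succ_iff_lt_or_eq.mp hj with h | h
        · rw [hmv, h3 j h, horth j h]; simp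
        · obtain rfl : j = i := Fin.ext h
          exact hpp
      · intro v
        rw [hmv, h4]
        have : Finset.univ.filter (fun j : Fin m => (j : ℕ) < i + 1)
            = insert i (Finset.univ.filter (fun j : Fin m => (j : ℕ) < i)) := by
          ext j
          simp only [Finset.mem_filter, Finset.mem_univ, true_and, Finset.mem_insert, Fin.ext_iff]
          omega
        rw [this, Finset.sum_insert (by simp)]
        abel
  have hpi : ∀ i : Fin m, H i *ᵥ a i = p i := fun i => by
    rw [hp, (inv i i.2.le).1]
  have hGS : ∀ i : Fin m,
      p i = a i - ∑ j ∈ Finset.univ.filter (fun j : Fin m => j < i),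
        ((a i ⬝ᵥ p j) / (p j ⬝ᵥ p j)) • p j := fun i => by
    conv_lhs => rw [← hpi, (inv i i.2.le).2.2.2]
    simp only [Fin.lt_def]
  have hspan : ∀ i : Fin m, p i ∈ Submodule.span ℝ (a '' Set.Iic i) := by
    intro i
    induction i using WellFoundedLT.induction with
    | ind i ih =>
      rw [hGS i]
      refine Submodule.sub_mem _ (Submodule.subset_span ⟨i, Set.mem_Iic.2 le_rfl, rfl⟩)
        (Submodule.sum_mem _ fun j hj => Submodule.smul_mem _ _ ?_)
      have hj' : j < i := by simpa using hj
      exact Submodule.span_mono (Set.image_mono (Set.Iic_subset_Iic.2 hj'.le)) (ih j hj')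
  refine ⟨fun i => ?_, fun i j hij => ?_, hGS⟩
  · have hne : p i ≠ 0 := by
      intro h0
      have hai : a i ∈ Submodule.span ℝ (a '' Set.Iio i) := by
        have := hGS i
        rw [h0, eq_comm, sub_eq_zero] at this
        rw [this]
        refine Submodule.sum_mem _ fun j hj => Submodule.smul_mem _ _ ?_
        have hj' : j < i := by simpa using hj
        exact Submodule.span_mono (Set.image_mono (Set.Iic_subset_Iio.2 hj')) (hspan j)
      exact ha.notMem_span_image (s := Set.Iio i) (by simp) hai
    have h : a i ⬝ᵥ (H i *ᵥ a i) = p i ⬝ᵥ p i := by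
      conv_lhs => rw [← (inv i i.2.le).2.1, ← mulVec_mulVec, dotProduct_mulVec,
        ← mulVec_transpose, ← hp, hpi]
    rw [h]
    refine lt_of_le_of_ne (Finset.sum_nonneg fun _ _ => mul_self_nonneg _) fun h => hne ?_
    exact dotProduct_self_eq_zero.1 h.symm
  · rw [hp i, mulVec_transpose, ← dotProduct_mulVec, (inv i i.2.le).2.2.1 j hij, dotProduct_zero]
end

section
/- Under the Huang recursion with linearly independent rows a₁,…,a_m and with iterates defined by x₁ = 0 and x_{i+1} = x_i − ((a_iᵀ x_i − b_i)/(a_iᵀ p_i)) p_i, for every i = 1,…,m the vector x_{i+1} is the unique minimum Euclidean norm solution of the first i equations: aⱼᵀ x_{i+1} = bⱼ for all j ≤ i, and ‖x_{i+1}‖₂ ≤ ‖x‖₂ for every x ∈ ℝⁿ satisfying aⱼᵀ x = bⱼ for all j ≤ i, with equality only for x = x_{i+1}. Moreover the norms increase monotonically: ‖x_i‖₂ ≤ ‖x_{i+1}‖₂ for every i. -/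
open Matrix

theorem symm_swap {n : ℕ} {H : Matrix (Fin n) (Fin n) ℝ} (hS : Hᵀ = H) (u v : Fin n → ℝ) :
    (H *ᵥ u) ⬝ᵥ v = u ⬝ᵥ (H *ᵥ v) := by
  rw [dotProduct_mulVec, ← mulVec_transpose, hS]

theorem step_mulVec {n : ℕ} {H H' : Matrix (Fin n) (Fin n) ℝ} (c : Fin n → ℝ)
    (hH : H' = H - (c ⬝ᵥ (H *ᵥ c))⁻¹ • vecMulVec (H *ᵥ c) (c ᵥ* H)) (z : Fin n → ℝ) :
    H' *ᵥ z = H *ᵥ z - ((c ⬝ᵥ (H *ᵥ c))⁻¹ * (c ⬝ᵥ (H *ᵥ z))) • (H *ᵥ c) := by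
  rw [hH, sub_mulVec, smul_mulVec, vecMulVec_mulVec, ← dotProduct_mulVec]
  ext i
  simp; ring

theorem step_symm {n : ℕ} {H H' : Matrix (Fin n) (Fin n) ℝ} (c : Fin n → ℝ) (hS : Hᵀ = H)
    (hH : H' = H - (c ⬝ᵥ (H *ᵥ c))⁻¹ • vecMulVec (H *ᵥ c) (c ᵥ* H)) : H'ᵀ = H' := by
  have : c ᵥ* H = H *ᵥ c := by rw [← mulVec_transpose, hS]
  rw [hH, this, transpose_sub, transpose_smul, transpose_vecMulVec, hS]

/-- **Minimum norm property of the Huang algorithm.** Under the Huang recursion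
with linearly independent rows `a₁,…,a_m` and iterates started at `x₁ = 0`
(here `x 0 = x₁`), each `x_{i+1}` is the unique minimum Euclidean norm solution
of the first `i` equations, and the norms `‖x_i‖₂` increase monotonically. -/
theorem huang_minimum_norm_solution
    (m n : ℕ) (hmn : m ≤ n)
    (a : Fin m → Fin n → ℝ) (ha : LinearIndependent ℝ a) (b : Fin m → ℝ)
    (H : ℕ → Matrix (Fin n) (Fin n) ℝ) (hH0 : H 0 = 1)
    (hHden : ∀ i : Fin m, a i ⬝ᵥ (H ↑i *ᵥ a i) ≠ 0)
    (p : Fin m → Fin n → ℝ)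
    (hp : ∀ i : Fin m, p i = (H ↑i)ᵀ *ᵥ a i)
    (hH : ∀ i : Fin m,
      H (↑i + 1) = H ↑i -
        (a i ⬝ᵥ (H ↑i *ᵥ a i))⁻¹ •
          vecMulVec (H ↑i *ᵥ a i) (a i ᵥ* H ↑i))
    (x : ℕ → Fin n → ℝ) (hx0 : x 0 = 0)
    (hx : ∀ i : Fin m,
      x (↑i + 1) = x ↑i - ((a i ⬝ᵥ x ↑i - b i) / (a i ⬝ᵥ p i)) • p i) :
    ∀ i : Fin m,
      (∀ j : Fin m, j ≤ i → a j ⬝ᵥ x (↑i + 1) = b j) ∧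
      (∀ y : Fin n → ℝ, (∀ j : Fin m, j ≤ i → a j ⬝ᵥ y = b j) →
        Real.sqrt (x (↑i + 1) ⬝ᵥ x (↑i + 1)) ≤ Real.sqrt (y ⬝ᵥ y) ∧
        (Real.sqrt (y ⬝ᵥ y) = Real.sqrt (x (↑i + 1) ⬝ᵥ x (↑i + 1)) → y = x (↑i + 1))) ∧
      Real.sqrt (x ↑i ⬝ᵥ x ↑i) ≤ Real.sqrt (x (↑i + 1) ⬝ᵥ x (↑i + 1)) := by
  have hinv : ∀ k : ℕ, k ≤ m →
      (H k)ᵀ = H k ∧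
      (∀ j : Fin m, (j : ℕ) < k → H k *ᵥ a j = 0) ∧
      (∀ z : Fin n → ℝ, (∀ j : Fin m, (j : ℕ) < k → a j ⬝ᵥ z = 0) → H k *ᵥ z = z) ∧
      (∀ z : Fin n → ℝ, (∀ j : Fin m, (j : ℕ) < k → a j ⬝ᵥ z = 0) → x k ⬝ᵥ z = 0) ∧
      (∀ j : Fin m, (j : ℕ) < k → a j ⬝ᵥ x k = b j) := by
    intro k
    induction k with
    | zero => intro _; simp [hH0, hx0]
    | succ k ih =>
      intro hk
      obtain ⟨hS, hZ, hK, hX, hE⟩ := ih (by omega)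
      obtain ⟨i, rfl⟩ : ∃ i : Fin m, (i : ℕ) = k := ⟨⟨k, hk⟩, rfl⟩
      have hp' := hp i
      have hd := hHden i
      rw [hS] at hp'
      have hlast : ∀ j : Fin m, (j : ℕ) < i + 1 → (j : ℕ) < i ∨ j = i := by
        intro j hj
        rcases Nat.lt_succ_iff_lt_or_eq.mp hj with h | h
        · exact Or.inl h
        · exact Or.inr (Fin.ext h)
      refine ⟨step_symm _ hS (hH i), ?_, ?_, ?_, ?_⟩
      · intro j hj
        rw [step_mulVec _ (hH i)]
        rcases hlast j hj with h | rfl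
        · simp [hZ j h]
        · rw [inv_mul_cancel₀ hd]; simp
      · intro z hz
        rw [step_mulVec _ (hH i), hK z (fun j hj => hz j (by omega)), hz i (by omega)]
        simp
      · intro z hz
        have hz' : ∀ j : Fin m, (j : ℕ) < i → a j ⬝ᵥ z = 0 := fun j hj => hz j (by omega)
        rw [hx i, hp', sub_dotProduct, smul_dotProduct, symm_swap hS, hK z hz', hX z hz',
          hz i (by omega)]
        simp
      · intro j hj
        rw [hx i, hp', dotProduct_sub, dotProduct_smul, smul_eq_mul]
        rcases hlast j hj with h | rfl
        · rw [← symm_swap hS (a j), hZ j h, hE j h]; simp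
        · rw [div_mul_cancel₀ _ hd]; ring
  have hpyth : ∀ k : ℕ, k ≤ m → ∀ y : Fin n → ℝ,
      (∀ j : Fin m, (j : ℕ) < k → a j ⬝ᵥ y = b j) →
      y ⬝ᵥ y = x k ⬝ᵥ x k + (y - x k) ⬝ᵥ (y - x k) := by
    intro k hk y hy
    obtain ⟨-, -, -, hX, hE⟩ := hinv k hk
    have h := hX (y - x k) (fun j hj => by rw [dotProduct_sub, hy j hj, hE j hj, sub_self])
    have hc := dotProduct_comm y (x k)
    simp only [dotProduct_sub, sub_dotProduct] at h ⊢
    linarith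
  have hnn : ∀ v : Fin n → ℝ, 0 ≤ v ⬝ᵥ v := fun v =>
    Finset.sum_nonneg fun i _ => mul_self_nonneg (v i)
  intro i
  have hE : ∀ j : Fin m, j ≤ i → a j ⬝ᵥ x (↑i + 1) = b j := fun j hj =>
    (hinv (i + 1) i.isLt).2.2.2.2 j (Nat.lt_succ_of_le hj)
  refine ⟨hE, ?_, ?_⟩
  · intro y hy
    have h := hpyth (i + 1) i.isLt y (fun j hj => hy j (Nat.le_of_lt_succ hj))
    refine ⟨Real.sqrt_le_sqrt (by linarith [hnn (y - x (↑i + 1))]), fun he => ?_⟩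
    rw [Real.sqrt_inj (hnn _) (hnn _)] at he
    have h0 : (y - x (↑i + 1)) ⬝ᵥ (y - x (↑i + 1)) = 0 := by linarith
    exact sub_eq_zero.mp (dotProduct_self_eq_zero.mp h0)
  · have h := hpyth i i.isLt.le (x (↑i + 1)) (fun j hj => hE j (le_of_lt hj))
    exact Real.sqrt_le_sqrt (by linarith [hnn (x (↑i + 1) - x ↑i)])
end

section
/- Let A ∈ ℝ^{m×n} with m ≤ n be regular, i.e. for every k = 1,…,m the k×k leading principal submatrix of A (first k rows and first k columns) is nonsingular. Consider the implicit LU recursion: H₁ = I ∈ ℝ^{n×n}, H_{i+1} = H_i − (H_i Aᵀ e_i)(e_iᵀ H_i)/(e_iᵀ H_i Aᵀ e_i), with search vectors p_i = H_iᵀ e_i, where e_i denotes the i-th unit vector. Then for every i = 1,…,m: the recursion is well defined (e_iᵀ H_i Aᵀ e_i ≠ 0); the first i rows of H_{i+1} are zero; the trailing block of H_{i+1} is the identity, i.e. (H_{i+1})_{jk} = δ_{jk} whenever j > i and k > i; and the search vector p_i satisfies (p_i)_i = 1 and (p_i)_j = 0 for all j > i, so that the matrix P = (p₁,…,p_m)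 is unit upper triangular. -/
open Matrix

/-- **Structure of the Abaffians in the implicit LU algorithm.** If `A` is
regular (all leading principal submatrices nonsingular), then the implicit LU
recursion (`H 0 = I`, `H_{i+1} = H_i − (H_i Aᵀ e_i)(e_iᵀ H_i)/(e_iᵀ H_i Aᵀ e_i)`,
`p_i = H_iᵀ e_i`, where `Aᵀ e_i = a_i` is the `i`-th row of `A`) is well defined;
the first `i` rows of `H_{i+1}` vanish, its trailing block is the identity, and
the search vectors satisfy `(p_i)_i = 1` and `(p_i)_j = 0` for `j > i`, so that
`P = (p₁,…,p_m)` is unit upper triangular. -/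
theorem implicitLU_abaffian_structure
    (m n : ℕ) (hmn : m ≤ n)
    (A : Matrix (Fin m) (Fin n) ℝ)
    (hA : ∀ k : Fin m,
      IsUnit (A.submatrix (Fin.castLE k.2) (Fin.castLE (k.2.trans_le hmn))).det)
    (H : ℕ → Matrix (Fin n) (Fin n) ℝ) (hH0 : H 0 = 1)
    (hH : ∀ i : Fin m,
      H (↑i + 1) = H ↑i -
        ((H ↑i *ᵥ A i) (Fin.castLE hmn i))⁻¹ •
          vecMulVec (H ↑i *ᵥ A i) (Pi.single (Fin.castLE hmn i) 1 ᵥ* H ↑i))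
    (p : Fin m → Fin n → ℝ)
    (hp : ∀ i : Fin m, p i = (H ↑i)ᵀ *ᵥ Pi.single (Fin.castLE hmn i) 1) :
    ∀ i : Fin m,
      ((H ↑i *ᵥ A i) (Fin.castLE hmn i) ≠ 0) ∧
      (∀ j : Fin n, (j : ℕ) ≤ (i : ℕ) → ∀ k : Fin n, H (↑i + 1) j k = 0) ∧
      (∀ j k : Fin n, (i : ℕ) < (j : ℕ) → (i : ℕ) < (k : ℕ) →
        H (↑i + 1) j k = if j = k then 1 else 0) ∧
      p i (Fin.castLE hmn i) = 1 ∧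
      (∀ j : Fin n, (i : ℕ) < (j : ℕ) → p i j = 0) := by
  have hstep : ∀ i : Fin m, ∀ j k, H (↑i + 1) j k = H ↑i j k -
      ((H ↑i *ᵥ A i) (Fin.castLE hmn i))⁻¹ *
        ((H ↑i *ᵥ A i) j * H ↑i (Fin.castLE hmn i) k) := by
    intro i j k
    rw [hH i]
    simp [vecMulVec_apply]
  have hstepv : ∀ i : Fin m, ∀ (v : Fin n → ℝ) (j), (H (↑i + 1) *ᵥ v) j = (H ↑i *ᵥ v) j -
      ((H ↑i *ᵥ A i) (Fin.castLE hmn i))⁻¹ *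
        ((H ↑i *ᵥ A i) j * (H ↑i *ᵥ v) (Fin.castLE hmn i)) := by
    intro i v j
    have h1 : (H (↑i + 1) *ᵥ v) j = ∑ k, H (↑i + 1) j k * v k := rfl
    have h2 : (H ↑i *ᵥ v) j = ∑ k, H ↑i j k * v k := rfl
    have h3 : (H ↑i *ᵥ v) (Fin.castLE hmn i) =
      ∑ k, H ↑i (Fin.castLE hmn i) k * v k := rfl
    rw [h1, h2, h3, Finset.mul_sum, Finset.mul_sum, ← Finset.sum_sub_distrib]
    refine Finset.sum_congr rfl fun k _ => ?_
    rw [hstep]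
    ring
  -- nonvanishing of the pivot
  have hne : ∀ i : Fin m,
      (∀ j k : Fin n, (i : ℕ) ≤ j → (i : ℕ) ≤ k → H ↑i j k = if j = k then 1 else 0) →
      (∀ l : Fin m, (l : ℕ) < i → H ↑i *ᵥ A l = 0) →
      (H ↑i *ᵥ A i) (Fin.castLE hmn i) ≠ 0 := by
    intro i hI hK h0
    have hu := hA i
    set r : Fin n → ℝ := H ↑i (Fin.castLE hmn i) with hr
    have hz : A.submatrix (Fin.castLE i.2) (Fin.castLE (i.2.trans_le hmn)) *ᵥ
        (fun k => r (Fin.castLE (i.2.trans_le hmn) k)) = 0 := by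
      funext l
      have hl : (H ↑i *ᵥ A (Fin.castLE i.2 l)) (Fin.castLE hmn i) = 0 := by
        rcases Nat.lt_or_ge l i with h | h
        · rw [hK _ (by simpa using h)]; rfl
        · have : Fin.castLE i.2 l = i := by
            apply Fin.ext
            have := l.2
            simp only [Fin.val_castLE]
            omega
          rw [this]; exact h0
      have hl' : ∑ k, r k * A (Fin.castLE i.2 l) k = 0 := hl
      change ∑ k, A (Fin.castLE i.2 l) (Fin.castLE (i.2.trans_le hmn) k) *
        r (Fin.castLE (i.2.trans_le hmn) k) = 0
      rw [← hl']
      refine Finset.sum_of_injOn (Fin.castLE (i.2.trans_le hmn))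
        (fun a _ b _ h => Fin.castLE_injective _ h) (by simp) ?_ ?_
      · intro k _ hk
        have hik : (i : ℕ) < k := by
          by_contra hc
          apply hk
          exact ⟨⟨k, by omega⟩, by simp, rfl⟩
        have : r k = 0 := by
          rw [hr, hI _ _ (by simp) hik.le, if_neg]
          intro h
          rw [← h] at hik
          simp at hik
        rw [this, zero_mul]
      · intro k _
        ring
    have hv := Matrix.eq_zero_of_mulVec_eq_zero hu.ne_zero hz
    have h1 := congrFun hv (Fin.last i)
    have h2 : r (Fin.castLE hmn i) = 0 := h1
    rw [hr, hI _ _ (by simp) (by simp)] at h2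
    simp at h2
  have key : ∀ i : ℕ, i ≤ m →
      (∀ j k : Fin n, (j : ℕ) < i → H i j k = 0) ∧
      (∀ j k : Fin n, i ≤ (j : ℕ) → i ≤ (k : ℕ) → H i j k = if j = k then 1 else 0) ∧
      (∀ l : Fin m, (l : ℕ) < i → H i *ᵥ A l = 0) := by
    intro i
    induction i with
    | zero =>
      intro _
      refine ⟨by simp, fun j k _ _ => ?_, by simp⟩
      rw [hH0, Matrix.one_apply]
    | succ i ih =>
      intro him
      obtain ⟨hZ, hI, hK⟩ := ih (by omega)
      have hc := hne ⟨i, him⟩ hI hK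
      have hs := hstep ⟨i, him⟩
      have hsv := hstepv ⟨i, him⟩
      simp only at hc hs hsv
      refine ⟨fun j k hj => ?_, fun j k hj hk => ?_, fun l hl => ?_⟩
      · rw [hs]
        rcases Nat.lt_or_ge j i with h | h
        · have : (H i *ᵥ A ⟨i, him⟩) j = 0 := by
            simp [mulVec, dotProduct, hZ j _ h]
          rw [this, hZ j k h]; ring
        · have : j = Fin.castLE hmn ⟨i, him⟩ := by
            apply Fin.ext
            simp only [Fin.val_castLE]
            omega
          rw [this]; field_simp; ring
      · have h0 : H i (Fin.castLE hmn ⟨i, him⟩) k = 0 := by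
          rw [hI _ _ (by simp) (by omega), if_neg]
          intro h
          rw [← h] at hk
          simp at hk
        rw [hs, h0, hI j k (by omega) (by omega)]
        ring
      · funext j
        rw [hsv]
        rcases Nat.lt_or_ge l i with h | h
        · rw [hK l h]; simp
        · have : l = ⟨i, him⟩ := by
            apply Fin.ext
            simp only
            omega
          rw [this, Pi.zero_apply]; field_simp; ring
  intro i
  obtain ⟨_, hI, hK⟩ := key i i.2.le
  obtain ⟨hZ', hI', _⟩ := key (i + 1) i.2
  have hpj : ∀ j, p i j = H ↑i (Fin.castLE hmn i) j := by
    intro j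
    rw [hp]
    simp
  refine ⟨hne i hI hK, fun j hj k => hZ' j k (by omega),
    fun j k hj hk => hI' j k hj hk, ?_, fun j hj => ?_⟩
  · rw [hpj, hI _ _ (by simp) (by simp)]; simp
  · rw [hpj, hI _ _ (by simp) hj.le, if_neg]
    intro h
    rw [← h] at hj
    simp at hj
end
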